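/- arXiv:1601.06865 — 2 statements merged into one kernel-verified Lean document; each statement's English description precedes it below -/
import Mathlib

section
/- There exists a constant c > 0 such that for infinitely many natural numbers n there is a simple (non-weak) pseudoline arrangement (L₁, …, Lₙ) in ℝ² with the following property: for every homeomorphism h : ℝ² → ℝ² such that each set Cᵢ := h(Lᵢ) is a finite union of line segments and closed rays, there is some index i for which Cᵢ has at least c·n bend points. That is, there exist simple arrangements of n pseudolines that, when represented by polygonal chains, require some pseudoline to have Ω(n) bends. -/
open Set

/-- The Euclidean plane. -/
abbrev Plane := EuclideanSpace ℝ (Fin 2)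

/-- A straight line in the plane. -/
def IsLine (S : Set Plane) : Prop :=
  ∃ a u : Plane, u ≠ 0 ∧ S = {p | ∃ t : ℝ, p = a + t • u}

/-- A pseudoline: image of a straight line under a self-homeomorphism of the plane. -/
def IsPseudoline (L : Set Plane) : Prop :=
  ∃ (h : Plane ≃ₜ Plane) (ℓ : Set Plane), IsLine ℓ ∧ L = h '' ℓ

/-- Two curves cross at `p`: `p` lies on both, and each of them meets every
connected component of the complement of the other. -/
def CrossAt (L M : Set Plane) (p : Plane) : Prop :=
  p ∈ L ∩ M ∧
  (∀ x ∈ Mᶜ, (L ∩ connectedComponentIn Mᶜ x).Nonempty) ∧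
  (∀ x ∈ Lᶜ, (M ∩ connectedComponentIn Lᶜ x).Nonempty)

/-- A weak pseudoline arrangement: pairwise distinct pseudolines, any two of which
intersect in at most one point, and cross wherever they intersect. -/
def IsWeakArrangement {n : ℕ} (L : Fin n → Set Plane) : Prop :=
  Function.Injective L ∧
  (∀ i, IsPseudoline (L i)) ∧
  (∀ i j, i ≠ j → (L i ∩ L j).Subsingleton) ∧
  (∀ i j, i ≠ j → ∀ p ∈ L i ∩ L j, CrossAt (L i) (L j) p)

/-- A (non-weak) pseudoline arrangement: a weak arrangement in which any two
pseudolines intersect (in exactly one point, where they cross). -/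
def IsArrangement {n : ℕ} (L : Fin n → Set Plane) : Prop :=
  IsWeakArrangement L ∧ ∀ i j, i ≠ j → (L i ∩ L j).Nonempty

/-- Simplicity: no point lies on three distinct pseudolines of the family. -/
def IsSimple {n : ℕ} (L : Fin n → Set Plane) : Prop :=
  ∀ (p : Plane) (i j k : Fin n),
    p ∈ L i → p ∈ L j → p ∈ L k → i = j ∨ i = k ∨ j = k

/-- Outerplanarity: every intersection point of two pseudolines of the family lies
in the closure of some unbounded connected component of the complement of the union. -/
def IsOuterplanar {n : ℕ} (L : Fin n → Set Plane) : Prop :=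
  ∀ i j, i ≠ j → ∀ p ∈ L i ∩ L j,
    ∃ x ∈ (⋃ k, L k)ᶜ,
      ¬ Bornology.IsBounded (connectedComponentIn (⋃ k, L k)ᶜ x) ∧
      p ∈ closure (connectedComponentIn (⋃ k, L k)ᶜ x)

/-- A closed ray in the plane. -/
def IsRay (R : Set Plane) : Prop :=
  ∃ a u : Plane, u ≠ 0 ∧ R = {p | ∃ t : ℝ, 0 ≤ t ∧ p = a + t • u}

/-- A closed line segment in the plane. -/
def IsSegment (S : Set Plane) : Prop :=
  ∃ a b : Plane, S = segment ℝ a b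

/-- A polygonal curve: a finite union of line segments and closed rays. -/
def IsPolygonal (C : Set Plane) : Prop :=
  ∃ 𝒮 : Finset (Set Plane), (∀ s ∈ 𝒮, IsSegment s ∨ IsRay s) ∧ C = ⋃ s ∈ 𝒮, s

/-- A bend point of a set `C`: a point of `C` no neighborhood of which meets `C`
in a subset of a straight line. -/
def IsBendPoint (C : Set Plane) (p : Plane) : Prop :=
  p ∈ C ∧ ∀ U ∈ nhds p, ¬ ∃ ℓ : Set Plane, IsLine ℓ ∧ C ∩ U ⊆ ℓ

namespace Bend

/-- A point of the plane with given coordinates. -/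
def pt (x y : ℝ) : Plane := !₂[x, y]

@[simp] lemma pt_zero (x y : ℝ) : (pt x y) 0 = x := by simp [pt]
@[simp] lemma pt_one (x y : ℝ) : (pt x y) 1 = y := by simp [pt]

lemma plane_ext {p q : Plane} (h0 : p 0 = q 0) (h1 : p 1 = q 1) : p = q := by
  ext i; fin_cases i
  · exact h0
  · exact h1

lemma pt_eta (p : Plane) : pt (p 0) (p 1) = p := plane_ext (by simp) (by simp)

lemma continuous_pt {X : Type*} [TopologicalSpace X] {f g : X → ℝ} (hf : Continuous f)
    (hg : Continuous g) : Continuous fun x => pt (f x) (g x) := by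
  unfold pt
  refine (PiLp.continuous_toLp 2 _).comp ?_
  refine continuous_pi fun i => ?_
  fin_cases i
  · exact hf
  · exact hg

/-- The graph of a real function, as a subset of the plane. -/
def graph (f : ℝ → ℝ) : Set Plane := {p | p 1 = f (p 0)}

/-- The vertical shear by a continuous function. -/
noncomputable def shear (f : ℝ → ℝ) (hf : Continuous f) : Plane ≃ₜ Plane where
  toFun p := pt (p 0) (p 1 + f (p 0))
  invFun p := pt (p 0) (p 1 - f (p 0))
  left_inv p := plane_ext (by simp) (by simp)
  right_inv p := plane_ext (by simp) (by simp)
  continuous_toFun := continuous_pt (by fun_prop) (by fun_prop)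
  continuous_invFun := continuous_pt (by fun_prop) (by fun_prop)

lemma isPseudoline_graph {f : ℝ → ℝ} (hf : Continuous f) : IsPseudoline (graph f) := by
  refine ⟨shear f hf, {p | ∃ t : ℝ, p = pt 0 0 + t • pt 1 0}, ⟨pt 0 0, pt 1 0, ?_, rfl⟩, ?_⟩
  · intro h
    have := congrArg (fun p : Plane => p 0) h
    simp at this
  · ext p
    constructor
    · intro hp
      refine ⟨pt (p 0) 0, ⟨p 0, plane_ext (by simp) (by simp)⟩, ?_⟩
      refine plane_ext (by simp [shear]) ?_
      simp only [graph, mem_ofPred_eq] at hp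
      simp [shear, hp]
    · rintro ⟨q, ⟨t, rfl⟩, rfl⟩
      simp [graph, shear]

lemma isPreconnected_above {f : ℝ → ℝ} (hf : Continuous f) :
    IsPreconnected {p : Plane | f (p 0) < p 1} := by
  have : {p : Plane | f (p 0) < p 1} = shear f hf '' {p : Plane | 0 < p 1} := by
    ext p
    constructor
    · intro hp
      refine ⟨pt (p 0) (p 1 - f (p 0)), ?_, plane_ext (by simp [shear]) (by simp [shear])⟩
      simpa using hp
    · rintro ⟨q, hq, rfl⟩
      simpa [shear] using hq
  rw [this]
  refine IsPreconnected.image ?_ _ (shear f hf).continuous.continuousOn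
  refine Convex.isPreconnected ?_
  intro p hp q hq a b ha hb hab
  simp only [mem_ofPred_eq] at hp hq ⊢
  simp only [PiLp.add_apply, PiLp.smul_apply, smul_eq_mul]
  rcases ha.eq_or_lt with rfl | ha
  · have : b = 1 := by linarith
    subst this; simpa using hq
  · positivity

lemma isPreconnected_below {f : ℝ → ℝ} (hf : Continuous f) :
    IsPreconnected {p : Plane | p 1 < f (p 0)} := by
  have h := isPreconnected_above (f := fun x => - f x) hf.neg
  have h2 := h.image (fun p : Plane => pt (p 0) (- p 1))
    (continuous_pt (by fun_prop) (by fun_prop)).continuousOn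
  convert h2 using 1
  ext p
  constructor
  · intro hp
    refine ⟨pt (p 0) (- p 1), ?_, plane_ext (by simp) (by simp)⟩
    simpa using hp
  · rintro ⟨q, hq, rfl⟩
    simp only [mem_ofPred_eq] at hq
    simp only [mem_ofPred_eq, pt_one, pt_zero]
    linarith

/-- Uniformly expanding functions. -/
def Expd (g : ℝ → ℝ) : Prop := ∃ ρ > 0, ∀ x y, x ≤ y → ρ * (y - x) ≤ g y - g x

lemma Expd.strictMono {g : ℝ → ℝ} (h : Expd g) : StrictMono g := by
  obtain ⟨ρ, hρ, h⟩ := h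
  intro x y hxy
  have := h x y hxy.le
  have : 0 < ρ * (y - x) := mul_pos hρ (by linarith)
  linarith

lemma Expd.exists_gt {g : ℝ → ℝ} (h : Expd g) (c : ℝ) : ∃ x, c < g x := by
  obtain ⟨ρ, hρ, h⟩ := h
  refine ⟨(|c - g 0| + 1) / ρ, ?_⟩
  have := h 0 ((|c - g 0| + 1) / ρ) (by positivity)
  rw [sub_zero, mul_div_cancel₀ _ hρ.ne'] at this
  linarith [le_abs_self (c - g 0)]

lemma Expd.exists_lt {g : ℝ → ℝ} (h : Expd g) (c : ℝ) : ∃ x, g x < c := by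
  have : Expd fun x => - g (-x) := by
    obtain ⟨ρ, hρ, h⟩ := h
    refine ⟨ρ, hρ, fun x y hxy => ?_⟩
    have := h (-y) (-x) (by linarith)
    linarith
  obtain ⟨x, hx⟩ := this.exists_gt (-c)
  exact ⟨-x, by linarith⟩

lemma Expd.exists_eq {g : ℝ → ℝ} (hg : Continuous g) (h : Expd g) (c : ℝ) : ∃ x, g x = c := by
  obtain ⟨x, hx⟩ := h.exists_lt c
  obtain ⟨y, hy⟩ := h.exists_gt c
  exact mem_range_of_exists_le_of_exists_ge hg ⟨x, hx.le⟩ ⟨y, hy.le⟩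

/-- Two functions one of whose differences is expanding. -/
def Sep (f g : ℝ → ℝ) : Prop := Expd (fun x => f x - g x) ∨ Expd (fun x => g x - f x)

lemma Sep.symm {f g : ℝ → ℝ} (h : Sep f g) : Sep g f := Or.symm h

lemma Sep.unique {f g : ℝ → ℝ} (h : Sep f g) {x y : ℝ} (hx : f x = g x) (hy : f y = g y) :
    x = y := by
  rcases h with h | h
  · exact h.strictMono.injective (by simp [hx, hy])
  · exact h.strictMono.injective (by simp [hx, hy])

lemma Sep.exists_eq {f g : ℝ → ℝ} (hf : Continuous f) (hg : Continuous g) (h : Sep f g) :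
    ∃ x, f x = g x := by
  rcases h with h | h
  · obtain ⟨x, hx⟩ := h.exists_eq (by fun_prop) 0
    exact ⟨x, by linarith⟩
  · obtain ⟨x, hx⟩ := h.exists_eq (by fun_prop) 0
    exact ⟨x, by linarith⟩

lemma Sep.exists_lt {f g : ℝ → ℝ} (h : Sep f g) : ∃ x, f x < g x := by
  rcases h with h | h
  · obtain ⟨x, hx⟩ := h.exists_lt 0
    exact ⟨x, by linarith⟩
  · obtain ⟨x, hx⟩ := h.exists_gt 0
    exact ⟨x, by linarith⟩

lemma cross_half {f g : ℝ → ℝ} (hg : Continuous g) (h : Sep f g) :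
    ∀ x ∈ (graph g)ᶜ, (graph f ∩ connectedComponentIn (graph g)ᶜ x).Nonempty := by
  intro p hp
  have hne : p 1 ≠ g (p 0) := hp
  rcases lt_or_gt_of_ne hne with hlt | hlt
  · obtain ⟨x, hx⟩ := h.exists_lt
    refine ⟨pt x (f x), by simp [graph], ?_⟩
    refine (isPreconnected_below hg).subset_connectedComponentIn (x := p) hlt ?_ ?_
    · intro q hq
      exact ne_of_lt hq
    · simpa using hx
  · obtain ⟨x, hx⟩ := h.symm.exists_lt
    refine ⟨pt x (f x), by simp [graph], ?_⟩
    refine (isPreconnected_above hg).subset_connectedComponentIn (x := p) hlt ?_ ?_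
    · intro q hq
      exact ne_of_gt hq
    · simpa using hx

lemma inter_subsingleton {f g : ℝ → ℝ} (h : Sep f g) : (graph f ∩ graph g).Subsingleton := by
  rintro p ⟨hp1, hp2⟩ q ⟨hq1, hq2⟩
  simp only [graph, mem_ofPred_eq] at hp1 hp2 hq1 hq2
  have : p 0 = q 0 := h.unique (by rw [← hp1, ← hp2]) (by rw [← hq1, ← hq2])
  exact plane_ext this (by rw [hp1, hq1, this])

lemma isArrangement_of_sep {n : ℕ} {f : Fin n → ℝ → ℝ} (hc : ∀ i, Continuous (f i))
    (hs : ∀ i j, i ≠ j → Sep (f i) (f j)) : IsArrangement fun i => graph (f i) := by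
  refine ⟨⟨?_, fun i => isPseudoline_graph (hc i), fun i j hij => inter_subsingleton (hs i j hij),
    fun i j hij p hp => ⟨hp, cross_half (hc j) (hs i j hij), cross_half (hc i) (hs j i hij.symm)⟩⟩,
    ?_⟩
  · intro i j hij
    by_contra hne
    obtain ⟨x, hx⟩ := (hs i j hne).exists_lt
    have : pt x (f i x) ∈ graph (f j) := by
      rw [← show graph (f i) = graph (f j) from hij]; simp [graph]
    simp only [graph, mem_ofPred_eq, pt_one, pt_zero] at this
    linarith
  · intro i j hij
    obtain ⟨x, hx⟩ := (hs i j hij).exists_eq (hc i) (hc j)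
    exact ⟨pt x (f i x), by simp [graph], by simp [graph, hx]⟩

/-- Generic vertical translations destroy all triple points. -/
lemma exists_generic {ι : Type*} [Fintype ι] [DecidableEq ι] (g : ι → ℝ → ℝ)
    (hs : ∀ i j, i ≠ j → Sep (g i) (g j)) (ε : ℝ) (hε : 0 < ε) (b₀ : ι → ℝ) :
    ∃ b : ι → ℝ, (∀ i, |b i - b₀ i| ≤ ε) ∧ ∀ i j k, i ≠ j → i ≠ k → j ≠ k → ∀ x,
      g i x + b i = g j x + b j → g i x + b i = g k x + b k → False := by
  have hs' : ∀ (b : ι → ℝ) i j, i ≠ j → Sep (fun x => g i x + b i) (fun x => g j x + b j) := by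
    intro b i j hij
    rcases hs i j hij with ⟨ρ, hρ, h⟩ | ⟨ρ, hρ, h⟩
    · exact Or.inl ⟨ρ, hρ, fun x y hxy => by have := h x y hxy; linarith⟩
    · exact Or.inr ⟨ρ, hρ, fun x y hxy => by have := h x y hxy; linarith⟩
  suffices H : ∀ s : Finset ι, ∃ b : ι → ℝ, (∀ i, |b i - b₀ i| ≤ ε) ∧
      ∀ i ∈ s, ∀ j ∈ s, ∀ k ∈ s, i ≠ j → i ≠ k → j ≠ k → ∀ x,
      g i x + b i = g j x + b j → g i x + b i = g k x + b k → False by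
    obtain ⟨b, hb, h⟩ := H Finset.univ
    exact ⟨b, hb, fun i j k => h i (Finset.mem_univ _) j (Finset.mem_univ _) k (Finset.mem_univ _)⟩
  intro s
  induction s using Finset.induction_on with
  | empty => exact ⟨b₀, by simp [hε.le], by simp⟩
  | insert m s hm ih =>
    obtain ⟨b, hb, h⟩ := ih
    -- the finite set of forbidden values
    let bad : Set ℝ := ⋃ i ∈ s, ⋃ j ∈ s, {v | i ≠ j ∧ ∃ x, g i x + b i = g j x + b j ∧
      g i x + b i = g m x + v}
    have hbad : bad.Finite := by
      refine Set.Finite.biUnion s.finite_toSet fun i _ => ?_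
      refine Set.Finite.biUnion s.finite_toSet fun j _ => ?_
      refine Set.Subsingleton.finite ?_
      rintro v ⟨hij, x, hx, hv⟩ v' ⟨_, x', hx', hv'⟩
      have : x = x' := (hs' b i j hij).unique hx hx'
      subst this
      linarith
    have hinf : (Set.Ioo (b₀ m) (b₀ m + ε)).Infinite := Set.Ioo_infinite (by linarith)
    obtain ⟨v, hv, hvb⟩ := (hinf.sdiff hbad).nonempty
    have key : ∀ i ∈ s, ∀ j ∈ s, i ≠ j → ∀ x, g i x + b i = g j x + b j →
        g i x + b i = g m x + v → False := by
      intro i hi j hj hij x h1 h2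
      refine hvb ?_
      simp only [bad, Set.mem_iUnion]
      exact ⟨i, hi, j, hj, hij, x, h1, h2⟩
    have hup : ∀ i ∈ s, Function.update b m v i = b i := by
      intro i hi
      rw [Function.update_of_ne]
      rintro rfl
      exact hm hi
    refine ⟨Function.update b m v, ?_, ?_⟩
    · intro i
      by_cases him : i = m
      · subst him
        rw [Function.update_self, abs_le]
        constructor <;> linarith [hv.1, hv.2]
      · rw [Function.update_of_ne him]; exact hb i
    · intro i hi j hj k hk hij hik hjk x h1 h2
      rw [Finset.mem_insert] at hi hj hk
      rcases hi with rfl | hi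
      · have hj := hj.resolve_left (Ne.symm hij)
        have hk := hk.resolve_left (Ne.symm hik)
        rw [hup j hj, Function.update_self] at h1
        rw [hup k hk, Function.update_self] at h2
        exact key j hj k hk hjk x (by linarith) (by linarith)
      · rcases hj with rfl | hj
        · have hk := hk.resolve_left (Ne.symm hjk)
          rw [hup i hi, Function.update_self] at h1
          rw [hup i hi, hup k hk] at h2
          exact key i hi k hk hik x h2 h1
        · rcases hk with rfl | hk
          · rw [hup i hi, hup j hj] at h1
            rw [hup i hi, Function.update_self] at h2
            exact key i hi j hj hij x h1 h2
          · rw [hup i hi, hup j hj] at h1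
            rw [hup i hi, hup k hk] at h2
            exact h i hi j hj k hk hij hik hjk x h1 h2

lemma isLine_eq {ℓ : Set Plane} (h : IsLine ℓ) {p q : Plane} (hp : p ∈ ℓ) (hq : q ∈ ℓ)
    (hpq : p ≠ q) : ℓ = {r | ∃ t : ℝ, r = p + t • (q - p)} := by
  obtain ⟨a, u, hu, rfl⟩ := h
  obtain ⟨s, rfl⟩ := hp
  obtain ⟨t, rfl⟩ := hq
  have hst : t - s ≠ 0 := by
    intro h
    apply hpq
    rw [show t = s by linarith]
  ext r
  constructor
  · rintro ⟨c, rfl⟩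
    refine ⟨(c - s) / (t - s), ?_⟩
    have : (a + t • u) - (a + s • u) = (t - s) • u := by rw [sub_smul]; abel
    rw [this, smul_smul, div_mul_cancel₀ _ hst, sub_smul]
    abel
  · rintro ⟨c, rfl⟩
    refine ⟨s + c * (t - s), ?_⟩
    have : (a + t • u) - (a + s • u) = (t - s) • u := by rw [sub_smul]; abel
    rw [this, smul_smul, add_smul]
    abel

lemma isLine_unique {ℓ m : Set Plane} (h : IsLine ℓ) (h' : IsLine m) {p q : Plane} (hp : p ∈ ℓ)
    (hq : q ∈ ℓ) (hp' : p ∈ m) (hq' : q ∈ m) (hpq : p ≠ q) : ℓ = m := by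
  rw [isLine_eq h hp hq hpq, isLine_eq h' hp' hq' hpq]

lemma piece_subset_line {s : Set Plane} (h : IsSegment s ∨ IsRay s) : ∃ ℓ, IsLine ℓ ∧ s ⊆ ℓ := by
  rcases h with ⟨a, b, rfl⟩ | ⟨a, u, hu, rfl⟩
  · by_cases hab : a = b
    · subst hab
      refine ⟨_, ⟨a, pt 1 0, ?_, rfl⟩, ?_⟩
      · intro h
        have := congrArg (fun p : Plane => p 0) h
        simp at this
      · intro p hp
        rw [segment_same] at hp
        exact ⟨0, by simpa using hp⟩
    · refine ⟨_, ⟨a, b - a, sub_ne_zero.2 (Ne.symm hab), rfl⟩, ?_⟩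
      intro p hp
      rw [segment_eq_image'] at hp
      obtain ⟨t, _, rfl⟩ := hp
      exact ⟨t, rfl⟩
  · refine ⟨_, ⟨a, u, hu, rfl⟩, ?_⟩
    rintro p ⟨t, _, rfl⟩
    exact ⟨t, rfl⟩

lemma isClosedEmbedding_line (a : Plane) {u : Plane} (hu : u ≠ 0) :
    Topology.IsClosedEmbedding fun t : ℝ => a + t • u :=
  (Homeomorph.addLeft a).isClosedEmbedding.comp (isClosedEmbedding_smul_left hu)

lemma isClosed_piece {s : Set Plane} (h : IsSegment s ∨ IsRay s) : IsClosed s := by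
  rcases h with ⟨a, b, rfl⟩ | ⟨a, u, hu, rfl⟩
  · rw [segment_eq_image']
    exact (isCompact_Icc.image (by fun_prop)).isClosed
  · have := (isClosedEmbedding_line a hu).isClosedMap _ (isClosed_Ici (a := (0 : ℝ)))
    convert this using 1
    ext p
    constructor
    · rintro ⟨t, ht, rfl⟩
      exact ⟨t, ht, rfl⟩
    · rintro ⟨t, ht, rfl⟩
      exact ⟨t, ht, rfl⟩

lemma finite_bends {C : Set Plane} (h : IsPolygonal C) : {p | IsBendPoint C p}.Finite := by
  classical
  obtain ⟨S, hS, rfl⟩ := h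
  refine Set.Finite.subset (s := ⋃ s ∈ S, ⋃ t ∈ S, {p | p ∈ s ∩ t ∧ (s ∩ t).Subsingleton}) ?_ ?_
  · refine Set.Finite.biUnion S.finite_toSet fun s _ => ?_
    refine Set.Finite.biUnion S.finite_toSet fun t _ => ?_
    refine Set.Subsingleton.finite ?_
    rintro p ⟨hp, h⟩ q ⟨hq, _⟩
    exact h hp hq
  · rintro p ⟨hpC, hp⟩
    by_contra hcon
    have hcon : ∀ s ∈ S, ∀ t ∈ S, p ∈ s → p ∈ t → (s ∩ t).Nontrivial := by
      intro s hs t ht hps hpt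
      by_contra h
      rw [Set.not_nontrivial_iff] at h
      apply hcon
      simp only [mem_iUnion]
      exact ⟨s, hs, t, ht, ⟨hps, hpt⟩, h⟩
    simp only [mem_iUnion] at hpC
    obtain ⟨s, hs, hps⟩ := hpC
    obtain ⟨ℓ, hℓ, hsℓ⟩ := piece_subset_line (hS s hs)
    refine hp (⋃ t ∈ S.filter (fun t => p ∉ t), t)ᶜ ?_ ⟨ℓ, hℓ, ?_⟩
    · refine IsOpen.mem_nhds ?_ ?_
      · rw [isOpen_compl_iff]
        refine Set.Finite.isClosed_biUnion (Finset.finite_toSet _) fun t ht => ?_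
        exact isClosed_piece (hS t (Finset.mem_filter.1 ht).1)
      · simp only [mem_compl_iff, mem_iUnion, not_exists]
        intro t ht
        exact (Finset.mem_filter.1 ht).2
    · rintro q ⟨hq, hqU⟩
      simp only [mem_iUnion] at hq
      obtain ⟨t, ht, hqt⟩ := hq
      have hpt : p ∈ t := by
        by_contra hpt
        apply hqU
        simp only [mem_iUnion]
        exact ⟨t, Finset.mem_filter.2 ⟨ht, hpt⟩, hqt⟩
      obtain ⟨m, hm, htm⟩ := piece_subset_line (hS t ht)
      obtain ⟨x, hx, y, hy, hxy⟩ := hcon s hs t ht hps hpt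
      rw [isLine_unique hℓ hm (hsℓ hx.1) (hsℓ hy.1) (htm hx.2) (htm hy.2) hxy]
      exact htm hqt

/-- A curve that is locally contained in lines is contained in a line. -/
lemma exists_line_of_local {γ : ℝ → Plane} (hi : Function.Injective γ) {α β : ℝ} (hαβ : α ≤ β)
    (hloc : ∀ t ∈ Icc α β, ∃ ℓ, IsLine ℓ ∧ ∀ᶠ s in nhds t, γ s ∈ ℓ) :
    ∃ ℓ, IsLine ℓ ∧ ∀ t ∈ Icc α β, γ t ∈ ℓ := by
  obtain ⟨ℓ, hℓ, h0⟩ := hloc α ⟨le_rfl, hαβ⟩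
  refine ⟨ℓ, hℓ, ?_⟩
  have hsub : Icc α β ⊆ {t | ∀ᶠ s in nhds t, γ s ∈ ℓ} := by
    refine isPreconnected_Icc.subset_of_closure_inter_subset isOpen_setOfPred_eventually_nhds
      ⟨α, ⟨le_rfl, hαβ⟩, h0⟩ ?_
    rintro t ⟨ht, htI⟩
    obtain ⟨m, hm, h1⟩ := hloc t htI
    rw [mem_closure_iff] at ht
    obtain ⟨t', h2, h3⟩ := ht {t | ∀ᶠ s in nhds t, γ s ∈ m} isOpen_setOfPred_eventually_nhds h1
    have h4 : ∀ᶠ s in nhds t', γ s ∈ m ∧ γ s ∈ ℓ := Filter.Eventually.and h2 h3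
    obtain ⟨x, hx, y, hy, hxy⟩ := (infinite_of_mem_nhds t' h4).nontrivial
    have : ℓ = m := isLine_unique hℓ hm hx.2 hy.2 hx.1 hy.1 (hi.ne hxy)
    rw [this]
    exact h1
  intro t ht
  exact (hsub ht).self_of_nhds

/-- Affine coordinate along a straight arc. -/
lemma exists_param {γ : ℝ → Plane} (hc : Continuous γ) (hi : Function.Injective γ) {α β : ℝ}
    {ℓ : Set Plane} (hℓ : IsLine ℓ) (h : ∀ t ∈ Icc α β, γ t ∈ ℓ) {z y : ℝ} (hz : z ∈ Icc α β)
    (hy : y ∈ Icc α β) (hzy : z < y) :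
    ∃ P : ℝ → ℝ, Continuous P ∧ StrictMonoOn P (Icc α β) ∧ P z = 0 ∧ P y = 1 ∧
      ∀ t ∈ Icc α β, γ t = γ z + P t • (γ y - γ z) := by
  have hne : γ z ≠ γ y := hi.ne hzy.ne
  have hw : inner ℝ (γ y - γ z) (γ y - γ z) ≠ 0 := by
    rw [Ne, inner_self_eq_zero, sub_eq_zero]
    exact hne.symm
  have hl := isLine_eq hℓ (h z hz) (h y hy) hne
  let P : ℝ → ℝ := fun t => inner ℝ (γ y - γ z) (γ t - γ z) / inner ℝ (γ y - γ z) (γ y - γ z)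
  have hPc : Continuous P := by
    refine Continuous.div_const ?_ _
    fun_prop
  have hP : ∀ t ∈ Icc α β, γ t = γ z + P t • (γ y - γ z) := by
    intro t ht
    have := h t ht
    rw [hl] at this
    obtain ⟨c, hc⟩ := this
    have : P t = c := by
      simp only [P]
      rw [show γ t - γ z = c • (γ y - γ z) by rw [hc]; abel, inner_smul_right,
        mul_div_cancel_right₀ _ hw]
    rw [this, hc]
  have hinj : InjOn P (Icc α β) := by
    intro s hs t ht hst
    apply hi
    rw [hP s hs, hP t ht, hst]
  have hz0 : P z = 0 := by simp [P]
  have hy1 : P y = 1 := by simp only [P]; exact div_self hw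
  refine ⟨P, hPc, ?_, hz0, hy1, hP⟩
  rcases hPc.continuousOn.strictMonoOn_of_injOn_Icc' (hz.1.trans hz.2) hinj with hm | hm
  · exact hm
  · have := hm hz hy hzy
    rw [hz0, hy1] at this
    linarith

/-- Menelaus' theorem in affine coordinates. -/
lemma menelaus {X Y Z a u : Plane} {d e f d' e' f' : ℝ}
    (hΔ : (X 0 - Z 0) * (Y 1 - Z 1) - (X 1 - Z 1) * (Y 0 - Z 0) ≠ 0)
    (hd : Z + d • (Y - Z) = a + d' • u) (he : X + e • (Y - X) = a + e' • u)
    (hf : Z + f • (X - Z) = a + f' • u) :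
    d * (1 - e) * (1 - f) + (1 - d) * e * f = 0 := by
  have d0 := congrArg (fun p : Plane => p 0) hd
  have d1 := congrArg (fun p : Plane => p 1) hd
  have e0 := congrArg (fun p : Plane => p 0) he
  have e1 := congrArg (fun p : Plane => p 1) he
  have f0 := congrArg (fun p : Plane => p 0) hf
  have f1 := congrArg (fun p : Plane => p 1) hf
  simp only [PiLp.add_apply, PiLp.smul_apply, PiLp.sub_apply, smul_eq_mul] at d0 d1 e0 e1 f0 f1
  have key : ((X 0 + e * (Y 0 - X 0)) - (Z 0 + d * (Y 0 - Z 0))) *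
      ((Z 1 + f * (X 1 - Z 1)) - (Z 1 + d * (Y 1 - Z 1))) -
      ((X 1 + e * (Y 1 - X 1)) - (Z 1 + d * (Y 1 - Z 1))) *
      ((Z 0 + f * (X 0 - Z 0)) - (Z 0 + d * (Y 0 - Z 0))) = 0 := by
    rw [d0, d1, e0, e1, f0, f1]
    ring
  have : ((X 0 - Z 0) * (Y 1 - Z 1) - (X 1 - Z 1) * (Y 0 - Z 0)) *
      (d * (1 - e) * (1 - f) + (1 - d) * e * f) = 0 := by
    linear_combination -key
  exact (mul_eq_zero.1 this).resolve_left hΔ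

/-- Ratio form of Menelaus. -/
lemma ratio_eq {d e f : ℝ} (h : d * (1 - e) * (1 - f) + (1 - d) * e * f = 0)
    (hd1 : d < 1) (he0 : 0 < e) (hf : f < 0) :
    (d / (1 - d)) * ((1 - e) / e) * ((1 - f) / (-f)) = 1 := by
  have h1 : 1 - d ≠ 0 := by linarith
  have h2 : e ≠ 0 := he0.ne'
  have h3 : f ≠ 0 := hf.ne
  field_simp
  linarith

lemma ratio1 {d d' : ℝ} (h : d < d') (h1 : d' < 1) : d / (1 - d) < d' / (1 - d') := by
  rw [div_lt_div_iff₀ (by linarith) (by linarith)]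
  nlinarith

lemma ratio2 {e e' : ℝ} (h : e' < e) (h0 : 0 < e') : (1 - e) / e < (1 - e') / e' := by
  rw [div_lt_div_iff₀ (by linarith) (by linarith)]
  nlinarith

lemma ratio3 {f f' : ℝ} (h : f < f') (h0 : f' < 0) : (1 - f) / (-f) < (1 - f') / (-f') := by
  rw [div_lt_div_iff₀ (by linarith) (by linarith)]
  nlinarith

/-- The multiplicative core of Pappus' theorem. -/
lemma nine_products {A0 A1 A2 B0 B1 B2 C0 C1 C2 a0 a1 a2 b0 b1 b2 c0 c1 c2 : ℝ}
    (pA0 : 0 < A0) (pA1 : 0 < A1) (pA2 : 0 < A2) (pB0 : 0 < B0) (pB1 : 0 < B1) (pB2 : 0 < B2)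
    (pC0 : 0 < C0) (pC1 : 0 < C1) (pC2 : 0 < C2)
    (h0 : A0 * B0 * C0 = 1) (h1 : A1 * B1 * C1 = 1) (h2 : A2 * B2 * C2 = 1)
    (k0 : a0 * b0 * c0 = 1) (k1 : a1 * b1 * c1 = 1) (k2 : a2 * b2 * c2 = 1)
    (hA0 : A0 < a0) (hA1 : A1 < a1) (hA2 : A2 < a2)
    (hB0 : B0 < b2) (hB1 : B1 < b0) (hB2 : B2 < b1)
    (hC0 : C0 < c1) (hC1 : C1 < c2) (hC2 : C2 < c0) : False := by
  have e1 : (A0 * A1 * A2) < (a0 * a1 * a2) := by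
    have := mul_lt_mul'' hA0 hA1 pA0.le pA1.le
    exact mul_lt_mul'' this hA2 (by positivity) pA2.le
  have e2 : (B0 * B1 * B2) < (b2 * b0 * b1) := by
    have := mul_lt_mul'' hB0 hB1 pB0.le pB1.le
    exact mul_lt_mul'' this hB2 (by positivity) pB2.le
  have e3 : (C0 * C1 * C2) < (c1 * c2 * c0) := by
    have := mul_lt_mul'' hC0 hC1 pC0.le pC1.le
    exact mul_lt_mul'' this hC2 (by positivity) pC2.le
  have e4 := mul_lt_mul'' (mul_lt_mul'' e1 e2 (by positivity) (by positivity)) e3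
    (by positivity) (by positivity)
  have l : (A0 * A1 * A2) * (B0 * B1 * B2) * (C0 * C1 * C2) =
      (A0 * B0 * C0) * (A1 * B1 * C1) * (A2 * B2 * C2) := by ring
  have r : (a0 * a1 * a2) * (b2 * b0 * b1) * (c1 * c2 * c0) =
      (a0 * b0 * c0) * (a1 * b1 * c1) * (a2 * b2 * c2) := by ring
  rw [l, r, h0, h1, h2, k0, k1, k2] at e4
  linarith

/-- Slopes of the nine classes of curves. -/
def sl : Fin 9 → ℕ := ![23, 50, 0, 29, 24, 29, 25, 32, 25]

/-- Intercepts of the nine curves of a gadget. -/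
noncomputable def ic : Fin 9 → ℝ := ![0, 6936 / 1000, 8788 / 1000, -1206 / 1000, 30 / 1000,
  839 / 1000, -285 / 1000, 52 / 1000, 327 / 1000]

/-- Only class `0` is bent. -/
noncomputable def vb (k : Fin 9) : ℝ := if k = 0 then 7 / 8 else 0

/-- The model gadget. -/
noncomputable def model (k : Fin 9) (t : ℝ) : ℝ := sl k * t + ic k + vb k * |t|

section
variable {F : Fin 9 → ℝ → ℝ} (hF : ∀ k, Continuous (F k))
  (hm : ∀ k t, |t| ≤ 9 / 20 → |F k t - model k t| ≤ 1 / 200)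

lemma crossing (hF : ∀ k, Continuous (F k))
    (hm : ∀ k t, |t| ≤ 9 / 20 → |F k t - model k t| ≤ 1 / 200) (k j : Fin 9) (u v : ℝ)
    (hu : -(9 / 20) ≤ u) (huv : u < v) (hv : v ≤ 9 / 20)
    (h1 : model k u + 1 / 100 < model j u) (h2 : model j v + 1 / 100 < model k v) :
    ∃ t, u < t ∧ t < v ∧ F k t = F j t := by
  have a1 := abs_le.1 (hm k u (abs_le.2 ⟨hu, by linarith⟩))
  have a2 := abs_le.1 (hm j u (abs_le.2 ⟨hu, by linarith⟩))
  have a3 := abs_le.1 (hm k v (abs_le.2 ⟨by linarith, hv⟩))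
  have a4 := abs_le.1 (hm j v (abs_le.2 ⟨by linarith, hv⟩))
  have hc : ContinuousOn (fun t => F k t - F j t) (Icc u v) := ((hF k).sub (hF j)).continuousOn
  have := intermediate_value_Ioo huv.le hc
  obtain ⟨t, ht, h⟩ := this (show (0 : ℝ) ∈ Ioo _ _ from ⟨by linarith, by linarith⟩)
  exact ⟨t, ht.1, ht.2, by linarith⟩
end

lemma noncollinear {F : Fin 9 → ℝ → ℝ} {γ : Fin 9 → ℝ → Plane}
    (hinj : ∀ k j s t, γ k s = γ j t → s = t ∧ F k s = F j t)
    (hu1 : ∀ s t, F 0 s = F 1 s → F 0 t = F 1 t → s = t)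
    (hu2 : ∀ s t, F 0 s = F 2 s → F 0 t = F 2 t → s = t)
    {x y z : ℝ} {PV PA PB : ℝ → ℝ} (cV : Continuous PV) (cA : Continuous PA) (cB : Continuous PB)
    (hz : F 0 z = F 1 z) (hy : F 0 y = F 2 y)
    (hzy : z < y) (hzx : z < x) (hxy : x < y)
    (ez : γ 0 z = γ 1 z) (ey : γ 0 y = γ 2 y) (ex : γ 1 x = γ 2 x)
    (V0 : PV z = 0) (V1 : PV y = 1) (A0 : PA z = 0) (A1 : PA x = 1) (B0 : PB x = 0) (B1 : PB y = 1)
    (hV : ∀ t ∈ Icc z y, γ 0 t = γ 0 z + PV t • (γ 0 y - γ 0 z))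
    (hA : ∀ t ∈ Icc z x, γ 1 t = γ 0 z + PA t • (γ 1 x - γ 0 z))
    (hB : ∀ t ∈ Icc x y, γ 2 t = γ 1 x + PB t • (γ 0 y - γ 1 x)) :
    (γ 1 x 0 - γ 0 z 0) * (γ 0 y 1 - γ 0 z 1) - (γ 1 x 1 - γ 0 z 1) * (γ 0 y 0 - γ 0 z 0) ≠ 0 := by
  intro hΔ
  obtain ⟨c, hc⟩ : ∃ c : ℝ, γ 1 x = γ 0 z + c • (γ 0 y - γ 0 z) := by
    by_cases h0 : γ 0 y 0 - γ 0 z 0 = 0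
    · by_cases h1 : γ 0 y 1 - γ 0 z 1 = 0
      · exfalso
        have : γ 0 y = γ 0 z := plane_ext (by linarith) (by linarith)
        have := (hinj _ _ _ _ this).1
        linarith
      · refine ⟨(γ 1 x 1 - γ 0 z 1) / (γ 0 y 1 - γ 0 z 1), plane_ext ?_ ?_⟩
        · rw [h0] at hΔ
          have : γ 1 x 0 - γ 0 z 0 = 0 := by
            have : (γ 1 x 0 - γ 0 z 0) * (γ 0 y 1 - γ 0 z 1) = 0 := by linarith
            exact (mul_eq_zero.1 this).resolve_right h1
          simp only [PiLp.add_apply, PiLp.smul_apply, PiLp.sub_apply, smul_eq_mul, h0]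
          linarith
        · simp only [PiLp.add_apply, PiLp.smul_apply, PiLp.sub_apply, smul_eq_mul]
          rw [div_mul_cancel₀ _ h1]; ring
    · refine ⟨(γ 1 x 0 - γ 0 z 0) / (γ 0 y 0 - γ 0 z 0), plane_ext ?_ ?_⟩
      · simp only [PiLp.add_apply, PiLp.smul_apply, PiLp.sub_apply, smul_eq_mul]
        rw [div_mul_cancel₀ _ h0]; ring
      · simp only [PiLp.add_apply, PiLp.smul_apply, PiLp.sub_apply, smul_eq_mul]
        field_simp
        linarith
  rcases lt_or_ge c 0 with h0 | h0
  · obtain ⟨t, ht, h⟩ := intermediate_value_Icc hxy.le cB.continuousOn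
      (show -c / (1 - c) ∈ Icc (PB x) (PB y) by
        rw [B0, B1]
        exact ⟨div_nonneg (by linarith) (by linarith), (div_le_one (by linarith)).2 (by linarith)⟩)
    have h1 := hB t ht
    have h2 : γ 2 t = γ 0 z := by
      rw [h1, h, hc]
      refine plane_ext ?_ ?_ <;>
      · simp only [PiLp.add_apply, PiLp.smul_apply, PiLp.sub_apply, smul_eq_mul]
        have : 1 - c ≠ 0 := by linarith
        field_simp
        ring
    obtain ⟨rfl, h3⟩ := hinj _ _ _ _ h2
    have := hu2 _ _ h3.symm hy
    linarith
  · rcases le_or_gt c 1 with h1 | h1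
    · obtain ⟨t, ht, h⟩ := intermediate_value_Icc hzy.le cV.continuousOn
        (show c ∈ Icc (PV z) (PV y) by rw [V0, V1]; exact ⟨h0, h1⟩)
      have h2 : γ 0 t = γ 1 x := by rw [hV t ht, h, hc]
      obtain ⟨rfl, h3⟩ := hinj _ _ _ _ h2
      have := hu1 _ _ h3 hz
      linarith
    · obtain ⟨t, ht, h⟩ := intermediate_value_Icc hzx.le cA.continuousOn
        (show 1 / c ∈ Icc (PA z) (PA x) by
          rw [A0, A1]
          exact ⟨by positivity, (div_le_one (by linarith)).2 (by linarith)⟩)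
      have h2 : γ 1 t = γ 0 y := by
        rw [hA t ht, h, hc]
        refine plane_ext ?_ ?_ <;>
        · simp only [PiLp.add_apply, PiLp.smul_apply, PiLp.sub_apply, smul_eq_mul]
          have : c ≠ 0 := by linarith
          field_simp
          ring
      obtain ⟨rfl, h3⟩ := hinj _ _ _ _ h2
      have := hu1 _ _ h3.symm hz
      linarith

/-- The gadget cannot be drawn with straight arcs. -/
lemma md0 (t : ℝ) : model 0 t = 23 * t + 7 / 8 * |t| := by
  simp [model, sl, ic, vb]

lemma md1 (t : ℝ) : model 1 t = 50 * t + 6936 / 1000 := by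
  have h1 : sl 1 = 50 := rfl
  have h2 : ic 1 = 6936 / 1000 := rfl
  have h3 : vb 1 = 0 := if_neg (by decide)
  rw [model, h1, h2, h3]; push_cast; ring

lemma md2 (t : ℝ) : model 2 t = 0 * t + 8788 / 1000 := by
  have h1 : sl 2 = 0 := rfl
  have h2 : ic 2 = 8788 / 1000 := rfl
  have h3 : vb 2 = 0 := if_neg (by decide)
  rw [model, h1, h2, h3]; push_cast; ring

lemma md3 (t : ℝ) : model 3 t = 29 * t + -1206 / 1000 := by
  have h1 : sl 3 = 29 := rfl
  have h2 : ic 3 = -1206 / 1000 := rfl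
  have h3 : vb 3 = 0 := if_neg (by decide)
  rw [model, h1, h2, h3]; push_cast; ring

lemma md4 (t : ℝ) : model 4 t = 24 * t + 30 / 1000 := by
  have h1 : sl 4 = 24 := rfl
  have h2 : ic 4 = 30 / 1000 := rfl
  have h3 : vb 4 = 0 := if_neg (by decide)
  rw [model, h1, h2, h3]; push_cast; ring

lemma md5 (t : ℝ) : model 5 t = 29 * t + 839 / 1000 := by
  have h1 : sl 5 = 29 := rfl
  have h2 : ic 5 = 839 / 1000 := rfl
  have h3 : vb 5 = 0 := if_neg (by decide)
  rw [model, h1, h2, h3]; push_cast; ring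

lemma md6 (t : ℝ) : model 6 t = 25 * t + -285 / 1000 := by
  have h1 : sl 6 = 25 := rfl
  have h2 : ic 6 = -285 / 1000 := rfl
  have h3 : vb 6 = 0 := if_neg (by decide)
  rw [model, h1, h2, h3]; push_cast; ring

lemma md7 (t : ℝ) : model 7 t = 32 * t + 52 / 1000 := by
  have h1 : sl 7 = 32 := rfl
  have h2 : ic 7 = 52 / 1000 := rfl
  have h3 : vb 7 = 0 := if_neg (by decide)
  rw [model, h1, h2, h3]; push_cast; ring

lemma md8 (t : ℝ) : model 8 t = 25 * t + 327 / 1000 := by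
  have h1 : sl 8 = 25 := rfl
  have h2 : ic 8 = 327 / 1000 := rfl
  have h3 : vb 8 = 0 := if_neg (by decide)
  rw [model, h1, h2, h3]; push_cast; ring

set_option maxHeartbeats 4000000 in
theorem gadget {F : Fin 9 → ℝ → ℝ} {γ : Fin 9 → ℝ → Plane} (hF : ∀ k, Continuous (F k))
    (hγ : ∀ k, Continuous (γ k))
    (hinj : ∀ k j s t, γ k s = γ j t → s = t ∧ F k s = F j t)
    (heq : ∀ k j t, F k t = F j t → γ k t = γ j t)
    (hu1 : ∀ s t, F 0 s = F 1 s → F 0 t = F 1 t → s = t)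
    (hu2 : ∀ s t, F 0 s = F 2 s → F 0 t = F 2 t → s = t)
    (hm : ∀ k t, |t| ≤ 9 / 20 → |F k t - model k t| ≤ 1 / 200)
    (hline : ∀ k, ∃ ℓ, IsLine ℓ ∧ ∀ t ∈ Icc (-(9 / 20) : ℝ) (9 / 20), γ k t ∈ ℓ) : False := by
  -- the triangle
  obtain ⟨z, zl, zr, hz⟩ := crossing hF hm 1 0 (-256 / 1000) (-236 / 1000) (by norm_num)
    (by norm_num) (by norm_num) (by norm_num [md0, md1, md2, md3, md4, md5, md6, md7, md8, abs_of_neg])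
    (by norm_num [md0, md1, md2, md3, md4, md5, md6, md7, md8, abs_of_neg])
  obtain ⟨y, yl, yr, hy⟩ := crossing hF hm 0 2 (3665 / 10000) (9 / 20) (by norm_num)
    (by norm_num) (by norm_num) (by norm_num [md0, md1, md2, md3, md4, md5, md6, md7, md8, abs_of_neg])
    (by norm_num [md0, md1, md2, md3, md4, md5, md6, md7, md8, abs_of_neg])
  obtain ⟨x, xl, xr, hx⟩ := crossing hF hm 1 2 (-63 / 1000) (1255 / 10000) (by norm_num)
    (by norm_num) (by norm_num) (by norm_num [md0, md1, md2, md3, md4, md5, md6, md7, md8, abs_of_neg])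
    (by norm_num [md0, md1, md2, md3, md4, md5, md6, md7, md8, abs_of_neg])
  -- crossings of the six transversals with the curves 0, 2, 1
  obtain ⟨d3, d3l, d3r, hd3⟩ := crossing hF hm 3 0 (-236 / 1000) (2385 / 10000) (by norm_num)
    (by norm_num) (by norm_num) (by norm_num [md0, md1, md2, md3, md4, md5, md6, md7, md8, abs_of_neg])
    (by norm_num [md0, md1, md2, md3, md4, md5, md6, md7, md8, abs_of_neg])
  obtain ⟨e3, e3l, e3r, he3⟩ := crossing hF hm 3 2 (3415 / 10000) (3665 / 10000) (by norm_num)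
    (by norm_num) (by norm_num) (by norm_num [md0, md1, md2, md3, md4, md5, md6, md7, md8, abs_of_neg])
    (by norm_num [md0, md1, md2, md3, md4, md5, md6, md7, md8, abs_of_neg])
  obtain ⟨f3, f3l, f3r, hf3⟩ := crossing hF hm 1 3 (-(9 / 20)) (-3855 / 10000) (by norm_num)
    (by norm_num) (by norm_num) (by norm_num [md0, md1, md2, md3, md4, md5, md6, md7, md8, abs_of_neg])
    (by norm_num [md0, md1, md2, md3, md4, md5, md6, md7, md8, abs_of_neg])
  obtain ⟨d4, d4l, d4r, hd4⟩ := crossing hF hm 4 0 (-236 / 1000) (-7 / 1000) (by norm_num)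
    (by norm_num) (by norm_num) (by norm_num [md0, md1, md2, md3, md4, md5, md6, md7, md8, abs_of_neg])
    (by norm_num [md0, md1, md2, md3, md4, md5, md6, md7, md8, abs_of_neg])
  obtain ⟨e4, e4l, e4r, he4⟩ := crossing hF hm 4 2 (364 / 1000) (3665 / 10000) (by norm_num)
    (by norm_num) (by norm_num) (by norm_num [md0, md1, md2, md3, md4, md5, md6, md7, md8, abs_of_neg])
    (by norm_num [md0, md1, md2, md3, md4, md5, md6, md7, md8, abs_of_neg])
  obtain ⟨f4, f4l, f4r, hf4⟩ := crossing hF hm 1 4 (-(9 / 20)) (-265 / 1000) (by norm_num)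
    (by norm_num) (by norm_num) (by norm_num [md0, md1, md2, md3, md4, md5, md6, md7, md8, abs_of_neg])
    (by norm_num [md0, md1, md2, md3, md4, md5, md6, md7, md8, abs_of_neg])
  obtain ⟨d5, d5l, d5r, hd5⟩ := crossing hF hm 5 0 (-236 / 1000) (-1195 / 10000) (by norm_num)
    (by norm_num) (by norm_num) (by norm_num [md0, md1, md2, md3, md4, md5, md6, md7, md8, abs_of_neg])
    (by norm_num [md0, md1, md2, md3, md4, md5, md6, md7, md8, abs_of_neg])
  obtain ⟨e5, e5l, e5r, he5⟩ := crossing hF hm 5 2 (2735 / 10000) (3665 / 10000) (by norm_num)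
    (by norm_num) (by norm_num) (by norm_num [md0, md1, md2, md3, md4, md5, md6, md7, md8, abs_of_neg])
    (by norm_num [md0, md1, md2, md3, md4, md5, md6, md7, md8, abs_of_neg])
  obtain ⟨f5, f5l, f5r, hf5⟩ := crossing hF hm 1 5 (-(9 / 20)) (-2895 / 10000) (by norm_num)
    (by norm_num) (by norm_num) (by norm_num [md0, md1, md2, md3, md4, md5, md6, md7, md8, abs_of_neg])
    (by norm_num [md0, md1, md2, md3, md4, md5, md6, md7, md8, abs_of_neg])
  obtain ⟨d6, d6l, d6r, hd6⟩ := crossing hF hm 6 0 (2385 / 10000) (3625 / 10000) (by norm_num)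
    (by norm_num) (by norm_num) (by norm_num [md0, md1, md2, md3, md4, md5, md6, md7, md8, abs_of_neg])
    (by norm_num [md0, md1, md2, md3, md4, md5, md6, md7, md8, abs_of_neg])
  obtain ⟨e6, e6l, e6r, he6⟩ := crossing hF hm 6 2 (1255 / 10000) (364 / 1000) (by norm_num)
    (by norm_num) (by norm_num) (by norm_num [md0, md1, md2, md3, md4, md5, md6, md7, md8, abs_of_neg])
    (by norm_num [md0, md1, md2, md3, md4, md5, md6, md7, md8, abs_of_neg])
  obtain ⟨f6, f6l, f6r, hf6⟩ := crossing hF hm 1 6 (-2895 / 10000) (-256 / 1000) (by norm_num)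
    (by norm_num) (by norm_num) (by norm_num [md0, md1, md2, md3, md4, md5, md6, md7, md8, abs_of_neg])
    (by norm_num [md0, md1, md2, md3, md4, md5, md6, md7, md8, abs_of_neg])
  obtain ⟨d7, d7l, d7r, hd7⟩ := crossing hF hm 7 0 (-7 / 1000) (3625 / 10000) (by norm_num)
    (by norm_num) (by norm_num) (by norm_num [md0, md1, md2, md3, md4, md5, md6, md7, md8, abs_of_neg])
    (by norm_num [md0, md1, md2, md3, md4, md5, md6, md7, md8, abs_of_neg])
  obtain ⟨e7, e7l, e7r, he7⟩ := crossing hF hm 7 2 (1255 / 10000) (2735 / 10000) (by norm_num)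
    (by norm_num) (by norm_num) (by norm_num [md0, md1, md2, md3, md4, md5, md6, md7, md8, abs_of_neg])
    (by norm_num [md0, md1, md2, md3, md4, md5, md6, md7, md8, abs_of_neg])
  obtain ⟨f7, f7l, f7r, hf7⟩ := crossing hF hm 1 7 (-3855 / 10000) (-256 / 1000) (by norm_num)
    (by norm_num) (by norm_num) (by norm_num [md0, md1, md2, md3, md4, md5, md6, md7, md8, abs_of_neg])
    (by norm_num [md0, md1, md2, md3, md4, md5, md6, md7, md8, abs_of_neg])
  obtain ⟨d8, d8l, d8r, hd8⟩ := crossing hF hm 8 0 (-1195 / 10000) (3625 / 10000) (by norm_num)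
    (by norm_num) (by norm_num) (by norm_num [md0, md1, md2, md3, md4, md5, md6, md7, md8, abs_of_neg])
    (by norm_num [md0, md1, md2, md3, md4, md5, md6, md7, md8, abs_of_neg])
  obtain ⟨e8, e8l, e8r, he8⟩ := crossing hF hm 8 2 (1255 / 10000) (3415 / 10000) (by norm_num)
    (by norm_num) (by norm_num) (by norm_num [md0, md1, md2, md3, md4, md5, md6, md7, md8, abs_of_neg])
    (by norm_num [md0, md1, md2, md3, md4, md5, md6, md7, md8, abs_of_neg])
  obtain ⟨f8, f8l, f8r, hf8⟩ := crossing hF hm 1 8 (-265 / 1000) (-256 / 1000) (by norm_num)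
    (by norm_num) (by norm_num) (by norm_num [md0, md1, md2, md3, md4, md5, md6, md7, md8, abs_of_neg])
    (by norm_num [md0, md1, md2, md3, md4, md5, md6, md7, md8, abs_of_neg])
  obtain ⟨ℓ0, hℓ0, h0⟩ := hline 0
  obtain ⟨ℓ1, hℓ1, h1⟩ := hline 1
  obtain ⟨ℓ2, hℓ2, h2⟩ := hline 2
  have inj : ∀ k, Function.Injective (γ k) := fun k s t hst => (hinj k k s t hst).1
  have ez : γ 0 z = γ 1 z := heq _ _ _ hz.symm
  have ey : γ 0 y = γ 2 y := heq _ _ _ hy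
  have ex : γ 1 x = γ 2 x := heq _ _ _ hx
  have mz : z ∈ Icc (-(9 / 20) : ℝ) (9 / 20) := ⟨by linarith, by linarith⟩
  have my : y ∈ Icc (-(9 / 20) : ℝ) (9 / 20) := ⟨by linarith, by linarith⟩
  have mx : x ∈ Icc (-(9 / 20) : ℝ) (9 / 20) := ⟨by linarith, by linarith⟩
  have hzy : z < y := by linarith
  have hzx : z < x := by linarith
  have hxy : x < y := by linarith
  obtain ⟨PV, cV, sV, V0, V1, hV⟩ := exists_param (hγ 0) (inj 0) hℓ0 h0 mz my hzy
  obtain ⟨PA, cA, sA, A0, A1, hA⟩ := exists_param (hγ 1) (inj 1) hℓ1 h1 mz mx hzx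
  obtain ⟨PB, cB, sB, B0, B1, hB⟩ := exists_param (hγ 2) (inj 2) hℓ2 h2 mx my hxy
  rw [← ez] at hA
  rw [← ex, ← ey] at hB
  have hΔ := noncollinear hinj hu1 hu2 cV cA cB hz.symm hy hzy hzx hxy ez ey ex V0 V1 A0 A1 B0 B1
    (fun t ht => hV t ⟨mz.1.trans ht.1, ht.2.trans my.2⟩)
    (fun t ht => hA t ⟨mz.1.trans ht.1, ht.2.trans mx.2⟩)
    (fun t ht => hB t ⟨mx.1.trans ht.1, ht.2.trans my.2⟩)
  have lt1 : ∀ t ∈ Icc (-(9 / 20) : ℝ) (9 / 20), t < y → PV t < 1 := fun t ht h => by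
    rw [← V1]; exact sV ht my h
  have gt0 : ∀ t ∈ Icc (-(9 / 20) : ℝ) (9 / 20), z < t → 0 < PV t := fun t ht h => by
    rw [← V0]; exact sV mz ht h
  have Blt1 : ∀ t ∈ Icc (-(9 / 20) : ℝ) (9 / 20), t < y → PB t < 1 := fun t ht h => by
    rw [← B1]; exact sB ht my h
  have Bgt0 : ∀ t ∈ Icc (-(9 / 20) : ℝ) (9 / 20), x < t → 0 < PB t := fun t ht h => by
    rw [← B0]; exact sB mx ht h
  have Alt0 : ∀ t ∈ Icc (-(9 / 20) : ℝ) (9 / 20), t < z → PA t < 0 := fun t ht h => by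
    rw [← A0]; exact sA ht mz h
  have men : ∀ (m : Fin 9) (d e f : ℝ), d ∈ Icc (-(9 / 20) : ℝ) (9 / 20) →
      e ∈ Icc (-(9 / 20) : ℝ) (9 / 20) → f ∈ Icc (-(9 / 20) : ℝ) (9 / 20) →
      z < d → d < y → x < e → e < y → f < z →
      F m d = F 0 d → F m e = F 2 e → F 1 f = F m f →
      0 < PV d / (1 - PV d) ∧ 0 < (1 - PB e) / PB e ∧ 0 < (1 - PA f) / (-PA f) ∧
      (PV d / (1 - PV d)) * ((1 - PB e) / PB e) * ((1 - PA f) / (-PA f)) = 1 := by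
    intro m d e f md me mf hzd hdy hxe hey hfz hd he hf
    have i1 := lt1 d md hdy
    have i2 := gt0 d md hzd
    have i3 := Blt1 e me hey
    have i4 := Bgt0 e me hxe
    have i5 := Alt0 f mf hfz
    refine ⟨div_pos i2 (by linarith), div_pos (by linarith) i4, div_pos (by linarith) (by linarith),
      ratio_eq ?_ i1 i4 i5⟩
    obtain ⟨ℓ, ⟨a, u, hu, rfl⟩, hl⟩ := hline m
    obtain ⟨d', hd'⟩ := hl d md
    obtain ⟨e', he'⟩ := hl e me
    obtain ⟨f', hf'⟩ := hl f mf
    refine menelaus (d' := d') (e' := e') (f' := f') (a := a) (u := u) hΔ ?_ ?_ ?_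
    · rw [← hd', heq _ _ _ hd, ← hV d md]
    · rw [← he', heq _ _ _ he, ← hB e me]
    · rw [← hf', ← heq _ _ _ hf, ← hA f mf]
  have md3 : d3 ∈ Icc (-(9 / 20) : ℝ) (9 / 20) := ⟨by linarith, by linarith⟩
  have me3 : e3 ∈ Icc (-(9 / 20) : ℝ) (9 / 20) := ⟨by linarith, by linarith⟩
  have mf3 : f3 ∈ Icc (-(9 / 20) : ℝ) (9 / 20) := ⟨by linarith, by linarith⟩
  have md4 : d4 ∈ Icc (-(9 / 20) : ℝ) (9 / 20) := ⟨by linarith, by linarith⟩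
  have me4 : e4 ∈ Icc (-(9 / 20) : ℝ) (9 / 20) := ⟨by linarith, by linarith⟩
  have mf4 : f4 ∈ Icc (-(9 / 20) : ℝ) (9 / 20) := ⟨by linarith, by linarith⟩
  have md5 : d5 ∈ Icc (-(9 / 20) : ℝ) (9 / 20) := ⟨by linarith, by linarith⟩
  have me5 : e5 ∈ Icc (-(9 / 20) : ℝ) (9 / 20) := ⟨by linarith, by linarith⟩
  have mf5 : f5 ∈ Icc (-(9 / 20) : ℝ) (9 / 20) := ⟨by linarith, by linarith⟩
  have md6 : d6 ∈ Icc (-(9 / 20) : ℝ) (9 / 20) := ⟨by linarith, by linarith⟩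
  have me6 : e6 ∈ Icc (-(9 / 20) : ℝ) (9 / 20) := ⟨by linarith, by linarith⟩
  have mf6 : f6 ∈ Icc (-(9 / 20) : ℝ) (9 / 20) := ⟨by linarith, by linarith⟩
  have md7 : d7 ∈ Icc (-(9 / 20) : ℝ) (9 / 20) := ⟨by linarith, by linarith⟩
  have me7 : e7 ∈ Icc (-(9 / 20) : ℝ) (9 / 20) := ⟨by linarith, by linarith⟩
  have mf7 : f7 ∈ Icc (-(9 / 20) : ℝ) (9 / 20) := ⟨by linarith, by linarith⟩
  have md8 : d8 ∈ Icc (-(9 / 20) : ℝ) (9 / 20) := ⟨by linarith, by linarith⟩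
  have me8 : e8 ∈ Icc (-(9 / 20) : ℝ) (9 / 20) := ⟨by linarith, by linarith⟩
  have mf8 : f8 ∈ Icc (-(9 / 20) : ℝ) (9 / 20) := ⟨by linarith, by linarith⟩
  obtain ⟨p3, q3, r3, s3⟩ := men 3 d3 e3 f3 md3 me3 mf3 (by linarith) (by linarith)
    (by linarith) (by linarith) (by linarith) hd3 he3 hf3
  obtain ⟨p4, q4, r4, s4⟩ := men 4 d4 e4 f4 md4 me4 mf4 (by linarith) (by linarith)
    (by linarith) (by linarith) (by linarith) hd4 he4 hf4
  obtain ⟨p5, q5, r5, s5⟩ := men 5 d5 e5 f5 md5 me5 mf5 (by linarith) (by linarith)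
    (by linarith) (by linarith) (by linarith) hd5 he5 hf5
  obtain ⟨p6, q6, r6, s6⟩ := men 6 d6 e6 f6 md6 me6 mf6 (by linarith) (by linarith)
    (by linarith) (by linarith) (by linarith) hd6 he6 hf6
  obtain ⟨p7, q7, r7, s7⟩ := men 7 d7 e7 f7 md7 me7 mf7 (by linarith) (by linarith)
    (by linarith) (by linarith) (by linarith) hd7 he7 hf7
  obtain ⟨p8, q8, r8, s8⟩ := men 8 d8 e8 f8 md8 me8 mf8 (by linarith) (by linarith)
    (by linarith) (by linarith) (by linarith) hd8 he8 hf8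
  exact nine_products p3 p4 p5 q3 q4 q5 r3 r4 r5 s3 s4 s5 s6 s7 s8
    (ratio1 (sV md3 md6 (by linarith)) (lt1 _ md6 (by linarith)))
    (ratio1 (sV md4 md7 (by linarith)) (lt1 _ md7 (by linarith)))
    (ratio1 (sV md5 md8 (by linarith)) (lt1 _ md8 (by linarith)))
    (ratio2 (sB me8 me3 (by linarith)) (Bgt0 _ me8 (by linarith)))
    (ratio2 (sB me6 me4 (by linarith)) (Bgt0 _ me6 (by linarith)))
    (ratio2 (sB me7 me5 (by linarith)) (Bgt0 _ me7 (by linarith)))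
    (ratio3 (sA mf3 mf7 (by linarith)) (Alt0 _ mf7 (by linarith)))
    (ratio3 (sA mf4 mf8 (by linarith)) (Alt0 _ mf8 (by linarith)))
    (ratio3 (sA mf5 mf6 (by linarith)) (Alt0 _ mf6 (by linarith)))

/-- Distance to the nearest integer. -/
noncomputable def wv (x : ℝ) : ℝ := |x - round x|

lemma wv_le (x y : ℝ) : wv x ≤ wv y + |x - y| := by
  have h1 : |x - round x| ≤ |x - round y| := round_le x (round y)
  have h2 : |x - round y| ≤ |x - y| + |y - round y| := abs_sub_le _ _ _
  unfold wv
  linarith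

lemma wv_lip (x y : ℝ) : |wv x - wv y| ≤ |x - y| := by
  have h1 := wv_le x y
  have h2 := wv_le y x
  rw [abs_sub_comm y x] at h2
  exact abs_sub_le_iff.2 ⟨by linarith, by linarith⟩

lemma continuous_wv : Continuous wv := by
  refine (LipschitzWith.of_dist_le_mul (K := 1) fun x y => ?_).continuous
  simpa [Real.dist_eq] using wv_lip x y

lemma wv_shift (m : ℕ) {t : ℝ} (ht : |t| ≤ 9 / 20) : wv (-(m : ℝ) + t) = |t| := by
  have h := abs_le.1 ht
  have h0 : round t = 0 := round_eq_zero_iff.2 ⟨by linarith, by linarith⟩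
  have h1 : round (-(m : ℝ) + t) = -(m : ℤ) := by
    have := round_intCast_add t (-(m : ℤ))
    rw [h0] at this
    push_cast at this
    simpa using this
  unfold wv
  rw [h1]
  push_cast
  congr 1
  ring

lemma sep_lin {a a' v v' : ℝ} (h : |v - v'| < |a - a'|) :
    Sep (fun x => a * x + v * wv x) (fun x => a' * x + v' * wv x) := by
  have key : ∀ a a' v v' : ℝ, |v - v'| < a - a' →
      Expd (fun x => (a * x + v * wv x) - (a' * x + v' * wv x)) := by
    intro a a' v v' h
    refine ⟨a - a' - |v - v'|, by linarith, fun x y hxy => ?_⟩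
    have h1 : |(v - v') * (wv y - wv x)| ≤ |v - v'| * (y - x) := by
      rw [abs_mul]
      refine mul_le_mul_of_nonneg_left ?_ (abs_nonneg _)
      have := wv_lip y x
      rwa [abs_of_nonneg (sub_nonneg.2 hxy)] at this
    have h2 := (abs_le.1 h1).1
    nlinarith
  rcases le_total a' a with h' | h'
  · rw [abs_of_nonneg (sub_nonneg.2 h')] at h
    exact Or.inl (key _ _ _ _ h)
  · rw [abs_of_nonpos (sub_nonpos.2 h'), abs_sub_comm] at h
    exact Or.inr (key _ _ _ _ (by linarith))

/-- Index type of the pseudolines. -/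
abbrev Idx (N : ℕ) := Fin 9 × Fin (51 * N)

/-- Small slope perturbation. -/
noncomputable def al (N : ℕ) (i : Idx N) : ℝ :=
  ((finProdFinEquiv i : Fin (9 * (51 * N))) : ℕ) / (1000 * N * (9 * (51 * N)))

lemma al_nonneg (N : ℕ) (i : Idx N) : 0 ≤ al N i := by unfold al; positivity

lemma al_mul_le {N : ℕ} (hN : 0 < N) (i : Idx N) : al N i * N ≤ 1 / 1000 := by
  have h : (((finProdFinEquiv i : Fin (9 * (51 * N))) : ℕ) : ℝ) ≤ 9 * (51 * N) := by
    exact_mod_cast (finProdFinEquiv i).2.le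
  have hN' : (0 : ℝ) < N := by exact_mod_cast hN
  unfold al
  rw [div_mul_eq_mul_div, div_le_div_iff₀ (by positivity) (by norm_num)]
  nlinarith

lemma al_le {N : ℕ} (hN : 0 < N) (i : Idx N) : al N i ≤ 1 / 1000 := by
  have h1 : (1 : ℝ) ≤ N := by exact_mod_cast hN
  nlinarith [al_nonneg N i, al_mul_le hN i]

lemma al_inj {N : ℕ} (hN : 0 < N) {i j : Idx N} (h : al N i = al N j) : i = j := by
  have hN' : (0 : ℝ) < N := by exact_mod_cast hN
  unfold al at h
  rw [div_left_inj' (by positivity)] at h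
  exact finProdFinEquiv.injective (Fin.ext (by exact_mod_cast h))

/-- The unshifted curves. -/
noncomputable def gf (N : ℕ) (i : Idx N) (x : ℝ) : ℝ :=
  ((sl i.1 : ℝ) + al N i) * x + vb i.1 * wv x

lemma continuous_gf (N : ℕ) (i : Idx N) : Continuous (gf N i) := by
  have := continuous_wv
  unfold gf
  fun_prop

lemma sl_diff {p q : ℕ} (h : p ≠ q) : (1 : ℝ) ≤ |(p : ℝ) - q| := by
  rcases lt_or_gt_of_ne h with h | h
  · have : (p : ℝ) + 1 ≤ q := by exact_mod_cast h
    rw [abs_sub_comm]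
    exact le_trans (by linarith) (le_abs_self _)
  · have : (q : ℝ) + 1 ≤ p := by exact_mod_cast h
    exact le_trans (by linarith) (le_abs_self _)

lemma vb_diff (k k' : Fin 9) : |vb k - vb k'| ≤ 7 / 8 := by
  unfold vb
  split_ifs <;> norm_num [abs_of_neg, abs_of_pos]

lemma vb_eq_of_sl : ∀ k k' : Fin 9, sl k = sl k' → (k = 0 ↔ k' = 0) := by decide

lemma sep_gf {N : ℕ} (hN : 0 < N) {i j : Idx N} (hij : i ≠ j) : Sep (gf N i) (gf N j) := by
  apply sep_lin
  by_cases h : sl i.1 = sl j.1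
  · have hv : vb i.1 = vb j.1 := by
      unfold vb
      simp only [vb_eq_of_sl _ _ h]
    rw [hv, h, sub_self, abs_zero, abs_pos]
    intro h'
    exact hij (al_inj hN (by linarith))
  · have h1 := sl_diff h
    have h2 := vb_diff i.1 j.1
    have e1 := al_nonneg N i
    have e2 := al_nonneg N j
    have e3 := al_le hN i
    have e4 := al_le hN j
    have h3 : |al N i - al N j| ≤ 1 / 1000 := abs_le.2 ⟨by linarith, by linarith⟩
    have h4 := abs_sub_abs_le_abs_sub ((sl i.1 : ℝ) - sl j.1) (al N j - al N i)
    rw [abs_sub_comm (al N j)] at h4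
    have h5 : ((sl i.1 : ℝ) - sl j.1) - (al N j - al N i)
      = (sl i.1 + al N i) - (sl j.1 + al N j) := by ring
    rw [h5] at h4
    linarith

lemma sl_le : ∀ k : Fin 9, sl k ≤ 50 := by decide

/-- Line of class `k` used by the gadget `(x0, y0)`. -/
def ix {N : ℕ} (k : Fin 9) (x0 y0 : Fin N) : Idx N :=
  (k, ⟨y0 + sl k * x0, by
    have h1 := Nat.mul_le_mul (sl_le k) x0.2.le
    have h2 := y0.2
    omega⟩)

/-- Base intercepts. -/
noncomputable def b0 (N : ℕ) (i : Idx N) : ℝ := ic i.1 + ((i.2 : ℕ) : ℝ)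

lemma model_close {N : ℕ} (hN : 0 < N) {b : Idx N → ℝ} (hb : ∀ i, |b i - b0 N i| ≤ 1 / 1000)
    (x0 y0 : Fin N) (k : Fin 9) {t : ℝ} (ht : |t| ≤ 9 / 20) :
    |(gf N (ix k x0 y0) (-((x0 : ℕ) : ℝ) + t) + b (ix k x0 y0) - ((y0 : ℕ) : ℝ)) - model k t|
      ≤ 1 / 200 := by
  have hbi := hb (ix k x0 y0)
  have e : (gf N (ix k x0 y0) (-((x0 : ℕ) : ℝ) + t) + b (ix k x0 y0) - ((y0 : ℕ) : ℝ)) - model k t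
      = al N (ix k x0 y0) * (-((x0 : ℕ) : ℝ) + t) + (b (ix k x0 y0) - b0 N (ix k x0 y0)) := by
    have e1 : (ix k x0 y0).1 = k := rfl
    have e2 : (((ix k x0 y0).2 : ℕ) : ℝ) = (y0 : ℕ) + sl k * (x0 : ℕ) := by
      simp [ix]
    unfold gf b0 model
    rw [e1, e2, wv_shift _ ht]
    ring
  rw [e]
  have ha0 := al_nonneg N (ix k x0 y0)
  have ha1 := al_mul_le hN (ix k x0 y0)
  have hx : (((x0 : ℕ) : ℝ)) + 1 ≤ N := by exact_mod_cast x0.2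
  have hx0 : (0 : ℝ) ≤ ((x0 : ℕ) : ℝ) := Nat.cast_nonneg _
  have ht' := abs_le.1 ht
  have h1 : |al N (ix k x0 y0) * (-((x0 : ℕ) : ℝ) + t)| ≤ 1 / 1000 := by
    rw [abs_mul, abs_of_nonneg ha0]
    refine le_trans (mul_le_mul_of_nonneg_left ?_ ha0) ha1
    exact abs_le.2 ⟨by linarith, by linarith⟩
  have := abs_add_le (al N (ix k x0 y0) * (-((x0 : ℕ) : ℝ) + t))
    (b (ix k x0 y0) - b0 N (ix k x0 y0))
  linarith

/-- The curves. -/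
noncomputable def ff (N : ℕ) (b : Idx N → ℝ) (i : Idx N) (x : ℝ) : ℝ := gf N i x + b i

lemma continuous_ff (N : ℕ) (b : Idx N → ℝ) (i : Idx N) : Continuous (ff N b i) :=
  (continuous_gf N i).add continuous_const

lemma sep_ff {N : ℕ} (hN : 0 < N) (b : Idx N → ℝ) {i j : Idx N} (hij : i ≠ j) :
    Sep (ff N b i) (ff N b j) := by
  unfold ff
  rcases sep_gf hN hij with ⟨ρ, hρ, h⟩ | ⟨ρ, hρ, h⟩
  · exact Or.inl ⟨ρ, hρ, fun x y hxy => by have := h x y hxy; linarith⟩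
  · exact Or.inr ⟨ρ, hρ, fun x y hxy => by have := h x y hxy; linarith⟩

lemma ix_ne {N : ℕ} {k k' : Fin 9} (h : k ≠ k') (x0 y0 : Fin N) : ix k x0 y0 ≠ ix k' x0 y0 :=
  fun e => h (congrArg Prod.fst e)

/-- Every gadget forces a bend on one of its arcs. -/
lemma exists_bend {N : ℕ} (hN : 0 < N) {b : Idx N → ℝ} (hb : ∀ i, |b i - b0 N i| ≤ 1 / 1000)
    (h : Plane ≃ₜ Plane) (x0 y0 : Fin N) :
    ∃ (k : Fin 9) (t : ℝ), |t| ≤ 9 / 20 ∧ IsBendPoint (h '' graph (ff N b (ix k x0 y0)))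
      (h (pt (-((x0 : ℕ) : ℝ) + t) (ff N b (ix k x0 y0) (-((x0 : ℕ) : ℝ) + t)))) := by
  by_contra hcon
  push Not at hcon
  set X : ℝ := ((x0 : ℕ) : ℝ) with hX
  set F : Fin 9 → ℝ → ℝ := fun k t => ff N b (ix k x0 y0) (-X + t) - ((y0 : ℕ) : ℝ) with hFdef
  set γ : Fin 9 → ℝ → Plane := fun k t => h (pt (-X + t) (ff N b (ix k x0 y0) (-X + t))) with hγdef
  have hγc : ∀ k, Continuous (γ k) := fun k => by
    refine h.continuous.comp (continuous_pt (by fun_prop) ?_)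
    exact (continuous_ff N b _).comp (by fun_prop)
  have hinj : ∀ k j s t, γ k s = γ j t → s = t ∧ F k s = F j t := by
    intro k j s t hst
    have h1 := h.injective hst
    have e0 := congrArg (fun p : Plane => p 0) h1
    have e1 := congrArg (fun p : Plane => p 1) h1
    simp only [pt_zero, pt_one] at e0 e1
    exact ⟨by linarith, by simp only [hFdef, e1]⟩
  have hmem : ∀ k s, γ k s ∈ h '' graph (ff N b (ix k x0 y0)) := fun k s =>
    ⟨_, by simp [graph], rfl⟩
  have hu : ∀ k, (0 : Fin 9) ≠ k → ∀ s t, F 0 s = F k s → F 0 t = F k t → s = t := by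
    intro k hk s t hs ht
    have := (sep_ff hN b (ix_ne hk x0 y0)).unique (x := -X + s) (y := -X + t)
      (by simp only [hFdef] at hs; linarith) (by simp only [hFdef] at ht; linarith)
    linarith
  refine gadget (F := F) (γ := γ) ?_ hγc hinj ?_ (hu 1 (by decide)) (hu 2 (by decide)) ?_ ?_
  · intro k
    exact ((continuous_ff N b _).comp (by fun_prop)).sub continuous_const
  · intro k j t hkj
    simp only [hFdef] at hkj
    have : ff N b (ix k x0 y0) (-X + t) = ff N b (ix j x0 y0) (-X + t) := by linarith
    simp only [hγdef, this]
  · intro k t ht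
    exact model_close hN hb x0 y0 k ht
  · intro k
    refine exists_line_of_local (fun s t hst => (hinj k k s t hst).1) (by norm_num) ?_
    intro t ht
    have h1 := hcon k t (abs_le.2 ht)
    unfold IsBendPoint at h1
    push Not at h1
    obtain ⟨U, hU, ℓ, hℓ, hsub⟩ := h1 (hmem k t)
    refine ⟨ℓ, hℓ, ?_⟩
    filter_upwards [(hγc k).continuousAt.preimage_mem_nhds hU] with s hs
    exact hsub ⟨hmem k s, hs⟩

/-- Counting bends over all curves. -/
lemma count_bends {N : ℕ} (hN : 0 < N) {b : Idx N → ℝ} (hb : ∀ i, |b i - b0 N i| ≤ 1 / 1000)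
    (h : Plane ≃ₜ Plane) (hp : ∀ i, IsPolygonal (h '' graph (ff N b i))) :
    N * N ≤ ∑ i : Idx N, {p | IsBendPoint (h '' graph (ff N b i)) p}.ncard := by
  classical
  choose k t ht hbend using exists_bend hN hb h
  have hfin := fun i => finite_bends (hp i)
  let S : Finset (Σ _ : Idx N, Plane) := Finset.univ.sigma fun i => (hfin i).toFinset
  have hS : S.card = ∑ i : Idx N, {p | IsBendPoint (h '' graph (ff N b i)) p}.ncard := by
    simp only [S, Finset.card_sigma]
    exact Finset.sum_congr rfl fun i _ => (Set.ncard_eq_toFinset_card _ (hfin i)).symm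
  rw [← hS]
  let φ : Fin N × Fin N → Σ _ : Idx N, Plane := fun z => ⟨ix (k z.1 z.2) z.1 z.2,
    h (pt (-((z.1 : ℕ) : ℝ) + t z.1 z.2)
      (ff N b (ix (k z.1 z.2) z.1 z.2) (-((z.1 : ℕ) : ℝ) + t z.1 z.2)))⟩
  have hφ : Function.Injective φ := by
    rintro ⟨x, y⟩ ⟨x', y'⟩ heq
    simp only [φ, Sigma.mk.injEq, heq_eq_eq] at heq
    obtain ⟨h1, h2⟩ := heq
    have e0 := congrArg (fun p : Plane => p 0) (h.injective h2)
    simp only [pt_zero] at e0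
    have t1 := abs_le.1 (ht x y)
    have t2 := abs_le.1 (ht x' y')
    have hx : x = x' := by
      by_contra hne
      have := sl_diff (fun e => hne (Fin.ext e))
      have h3 : |((x : ℕ) : ℝ) - (x' : ℕ)| ≤ 9 / 10 := abs_le.2 ⟨by linarith, by linarith⟩
      linarith
    subst hx
    have hk : k x y = k x y' := congrArg Prod.fst h1
    have hd : ((ix (k x y) x y).2 : ℕ) = (ix (k x y') x y').2 :=
      congrArg (fun z : Idx N => (z.2 : ℕ)) h1
    simp only [ix, hk] at hd
    have : y = y' := Fin.ext (by omega)
    rw [this]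
  have hcard : (Finset.univ.image φ).card = N * N := by
    rw [Finset.card_image_of_injective _ hφ]
    simp
  rw [← hcard]
  refine Finset.card_le_card ?_
  intro z hz
  obtain ⟨w, -, rfl⟩ := Finset.mem_image.1 hz
  simp only [S, φ, Finset.mem_sigma, Finset.mem_univ, true_and, Set.Finite.mem_toFinset]
  exact hbend w.1 w.2

lemma main_N {N : ℕ} (hN : 0 < N) : ∃ L : Fin (9 * (51 * N)) → Set Plane,
    IsArrangement L ∧ IsSimple L ∧ ∀ h : Plane ≃ₜ Plane, (∀ i, IsPolygonal (h '' L i)) →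
      ∃ i, (1 / 459 ^ 2 : ℝ) * ((9 * (51 * N) : ℕ) : ℝ) ≤
        ({p | IsBendPoint (h '' L i) p}.ncard : ℝ) := by
  obtain ⟨b, hb, hgen⟩ := exists_generic (gf N) (fun i j hij => sep_gf hN hij) (1 / 1000)
    (by norm_num) (b0 N)
  let e : Idx N ≃ Fin (9 * (51 * N)) := finProdFinEquiv
  refine ⟨fun i => graph (ff N b (e.symm i)), ?_, ?_, ?_⟩
  · exact isArrangement_of_sep (f := fun i => ff N b (e.symm i)) (fun i => continuous_ff N b _)
      fun i j hij => sep_ff hN b (e.symm.injective.ne hij)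
  · intro p i j l hi hj hl
    by_contra hcon
    push Not at hcon
    have hi' : p 1 = ff N b (e.symm i) (p 0) := hi
    have hj' : p 1 = ff N b (e.symm j) (p 0) := hj
    have hl' : p 1 = ff N b (e.symm l) (p 0) := hl
    exact hgen _ _ _ (e.symm.injective.ne hcon.1) (e.symm.injective.ne hcon.2.1)
      (e.symm.injective.ne hcon.2.2) (p 0) (hi'.symm.trans hj') (hi'.symm.trans hl')
  · intro h hp
    by_contra hcon
    push Not at hcon
    have hcount := count_bends hN hb h fun i => by simpa using hp (e i)
    have hlt : ∑ i : Idx N, (({p | IsBendPoint (h '' graph (ff N b i)) p}.ncard : ℕ) : ℝ) <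
        ∑ i : Idx N, (1 / 459 ^ 2 : ℝ) * ((9 * (51 * N) : ℕ) : ℝ) := by
      refine Finset.sum_lt_sum_of_nonempty ⟨(0, ⟨0, by omega⟩), Finset.mem_univ _⟩ fun i _ => ?_
      simpa using hcon (e i)
    have h1 : ((N * N : ℕ) : ℝ) ≤
        ∑ i : Idx N, (({p | IsBendPoint (h '' graph (ff N b i)) p}.ncard : ℕ) : ℝ) := by
      exact_mod_cast hcount
    have h2 : ∑ i : Idx N, (1 / 459 ^ 2 : ℝ) * ((9 * (51 * N) : ℕ) : ℝ) = ((N * N : ℕ) : ℝ) := by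
      rw [Finset.sum_const, Finset.card_univ, Fintype.card_prod, Fintype.card_fin, Fintype.card_fin,
        nsmul_eq_mul]
      push_cast
      ring
    linarith

end Bend

/-- Theorem 3. There exist simple arrangements of `n` pseudolines
that, when represented by polygonal chains, require some pseudoline to have `Ω(n)`
bends. -/
theorem exists_arrangement_requiring_linear_bends :
    ∃ c : ℝ, 0 < c ∧
      {n : ℕ | ∃ L : Fin n → Set Plane,
        IsArrangement L ∧ IsSimple L ∧
        ∀ h : Plane ≃ₜ Plane,
          (∀ i, IsPolygonal (h '' L i)) →
          ∃ i, c * n ≤ ({p | IsBendPoint (h '' L i) p}.ncard : ℝ)}.Infinite := by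
  refine ⟨1 / 459 ^ 2, by norm_num, ?_⟩
  refine Set.infinite_of_injective_forall_mem (f := fun N : ℕ => 9 * (51 * (N + 1))) ?_ ?_
  · intro a b hab
    simp only at hab
    omega
  · intro N
    exact Bend.main_N (Nat.succ_pos N)
end

section
/- There exists a constant c > 0 such that for infinitely many natural numbers n there is a simple (non-weak) pseudoline arrangement (L₁, …, Lₙ) in ℝ² with the following property: for every homeomorphism h : ℝ² → ℝ² such that each set Cᵢ := h(Lᵢ) is a finite union of line segments and closed rays, the total number of bend points summed over C₁, …, Cₙ is at least c·n². That is, there exist simple arrangements of n pseudolines whose every representation by polygonal chains has Ω(n²) bends in total. -/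
open Set

namespace BendProof

/-- The graph of a function. -/
def Gr (f : ℝ → ℝ) : Set Plane := {p | p 1 = f (p 0)}

/-- The point with coordinates `x, y`. -/
noncomputable def pt (x y : ℝ) : Plane := !₂[x, y]

@[simp] lemma pt_zero (x y : ℝ) : pt x y 0 = x := by simp [pt]
@[simp] lemma pt_one (x y : ℝ) : pt x y 1 = y := by simp [pt]

lemma pt_eta (p : Plane) : pt (p 0) (p 1) = p := by
  ext i; fin_cases i <;> simp

lemma continuous_pt {X : Type*} [TopologicalSpace X] {f g : X → ℝ} (hf : Continuous f)
    (hg : Continuous g) : Continuous fun x => pt (f x) (g x) := by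
  unfold pt
  refine (PiLp.continuous_toLp 2 _).comp ?_
  refine continuous_pi fun i => ?_
  fin_cases i <;> simpa

lemma continuous_coord (i : Fin 2) : Continuous fun p : Plane => p i := by fun_prop

/-- The vertical shear homeomorphism given by a continuous function. -/
noncomputable def shear (f : ℝ → ℝ) (hf : Continuous f) : Plane ≃ₜ Plane where
  toFun p := pt (p 0) (p 1 + f (p 0))
  invFun p := pt (p 0) (p 1 - f (p 0))
  left_inv p := by simp [pt_eta]
  right_inv p := by simp [pt_eta]
  continuous_toFun := continuous_pt (continuous_coord 0)
    ((continuous_coord 1).add (hf.comp (continuous_coord 0)))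
  continuous_invFun := continuous_pt (continuous_coord 0)
    ((continuous_coord 1).sub (hf.comp (continuous_coord 0)))

lemma shear_apply (f : ℝ → ℝ) (hf : Continuous f) (p : Plane) :
    shear f hf p = pt (p 0) (p 1 + f (p 0)) := rfl

lemma isPseudoline_Gr {f : ℝ → ℝ} (hf : Continuous f) : IsPseudoline (Gr f) := by
  refine ⟨shear f hf, {p | ∃ t : ℝ, p = 0 + t • pt 1 0}, ⟨0, pt 1 0, ?_, rfl⟩, ?_⟩
  · intro h
    have := congrArg (fun p : Plane => p 0) h
    simp at this
  · ext p
    simp only [Gr, Set.mem_setOf_eq, Set.mem_image]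
    constructor
    · intro hp
      refine ⟨_, ⟨p 0, rfl⟩, ?_⟩
      rw [shear_apply]
      simp [← hp, pt_eta]
    · rintro ⟨q, ⟨t, rfl⟩, rfl⟩
      simp [shear_apply]

lemma convex_upper (ε : ℝ) : Convex ℝ {p : Plane | 0 < ε * p 1} := by
  intro x hx y hy a b ha hb hab
  simp only [Set.mem_setOf_eq, PiLp.add_apply, PiLp.smul_apply, smul_eq_mul] at *
  rcases eq_or_lt_of_le ha with h | h
  · subst h
    have : b = 1 := by linarith
    subst this; simpa using hy
  · have := mul_pos h hx
    have := mul_nonneg hb hy.le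
    nlinarith

lemma preconn_side {f : ℝ → ℝ} (hf : Continuous f) (ε : ℝ) :
    IsPreconnected {p : Plane | 0 < ε * (p 1 - f (p 0))} := by
  have h := (convex_upper ε).isPreconnected.image (shear f hf) (shear f hf).continuous.continuousOn
  convert h using 1
  ext p
  simp only [Set.mem_setOf_eq, Set.mem_image]
  constructor
  · intro hp
    exact ⟨pt (p 0) (p 1 - f (p 0)), by simpa using hp, by simp [shear_apply, pt_eta]⟩
  · rintro ⟨q, hq, rfl⟩
    simpa [shear_apply] using hq

lemma meets_comp {f g : ℝ → ℝ} (hg : Continuous g) (h1 : ∃ x, f x < g x) (h2 : ∃ x, g x < f x) :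
    ∀ x ∈ (Gr g)ᶜ, (Gr f ∩ connectedComponentIn (Gr g)ᶜ x).Nonempty := by
  intro p hp
  have key : ∀ ε : ℝ, 0 < ε * (p 1 - g (p 0)) → (∃ x, 0 < ε * (f x - g x)) →
      (Gr f ∩ connectedComponentIn (Gr g)ᶜ p).Nonempty := by
    rintro ε hpε ⟨x, hx⟩
    have hsub : {q : Plane | 0 < ε * (q 1 - g (q 0))} ⊆ connectedComponentIn (Gr g)ᶜ p := by
      apply (preconn_side hg ε).subset_connectedComponentIn hpε
      intro q hq hq'
      simp only [Gr, Set.mem_setOf_eq] at hq hq'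
      rw [hq'] at hq
      simp at hq
    refine ⟨pt x (f x), by simp [Gr], hsub ?_⟩
    simpa using hx
  rcases lt_trichotomy (p 1) (g (p 0)) with h | h | h
  · obtain ⟨x, hx⟩ := h1
    exact key (-1) (by linarith) ⟨x, by linarith⟩
  · exact absurd h hp
  · obtain ⟨x, hx⟩ := h2
    exact key 1 (by linarith) ⟨x, by linarith⟩

/-- A triangular bump, periodic with period one. -/
noncomputable def bump (x : ℝ) : ℝ := max 0 (|x - round x| - 791 / 1600)

lemma dist_round_lip (x y : ℝ) : |x - round x| ≤ |y - round y| + |x - y| := by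
  have h := round_le x (round y)
  have h2 := abs_sub_le x y (round y)
  linarith

lemma bump_lip (x y : ℝ) : |bump x - bump y| ≤ |x - y| := by
  have h1 := dist_round_lip x y
  have h2 := dist_round_lip y x
  rw [abs_sub_comm y x] at h2
  unfold bump
  refine (abs_max_sub_max_le_max _ _ _ _).trans ?_
  simp only [sub_self, abs_zero]
  refine max_le (abs_nonneg _) ?_
  rw [abs_le]; constructor <;> linarith

lemma continuous_bump : Continuous bump := by
  refine (LipschitzWith.of_dist_le_mul (K := 1) fun x y => ?_).continuous
  simpa [Real.dist_eq] using bump_lip x y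

lemma bump_add_nat (x : ℝ) (i : ℕ) : bump ((i : ℝ) + x) = bump x := by
  unfold bump
  rw [add_comm, round_add_natCast]; push_cast; ring_nf

lemma bump_eq {x : ℝ} (h0 : 0 ≤ x) (h1 : x ≤ 1) : bump x = max 0 (min x (1 - x) - 791 / 1600) := by
  unfold bump
  rcases eq_or_lt_of_le h1 with h | h
  · subst h; simp
  · rw [abs_sub_round_eq_min, Int.fract_eq_self.2 ⟨h0, h⟩]

/-- The general curve. -/
noncomputable def cv (S k E : ℝ) (x : ℝ) : ℝ := S * x + k + E * bump x

lemma continuous_cv (S k E : ℝ) : Continuous (cv S k E) := by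
  unfold cv
  have := continuous_bump
  fun_prop

lemma cv_diff {S k E S' k' E' : ℝ} (h : |E - E'| < S - S') {x y : ℝ} (hxy : x < y) :
    (S - S' - |E - E'|) * (y - x) ≤
      (cv S k E y - cv S' k' E' y) - (cv S k E x - cv S' k' E' x) := by
  have hb := bump_lip y x
  rw [abs_of_pos (sub_pos.2 hxy)] at hb
  have h3 : |(E - E') * (bump y - bump x)| ≤ |E - E'| * (y - x) := by
    rw [abs_mul]; exact mul_le_mul_of_nonneg_left hb (abs_nonneg _)
  have h4 := (abs_le.1 h3).1
  unfold cv
  nlinarith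

lemma cv_strictMono {S k E S' k' E' : ℝ} (h : |E - E'| < S - S') :
    StrictMono fun x => cv S k E x - cv S' k' E' x := by
  intro x y hxy
  have := cv_diff (k := k) (k' := k') h hxy
  have h2 : 0 < (S - S' - |E - E'|) * (y - x) := mul_pos (by linarith) (by linarith)
  simp only; linarith

lemma cv_pos {S k E S' k' E' : ℝ} (h : |E - E'| < S - S') :
    (∃ x, cv S' k' E' x < cv S k E x) ∧ (∃ x, cv S k E x < cv S' k' E' x) := by
  set d := cv S k E 0 - cv S' k' E' 0 with hd
  set m := S - S' - |E - E'| with hm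
  have hm0 : 0 < m := by linarith
  constructor
  · refine ⟨(|d| + 1) / m, ?_⟩
    have hx : 0 < (|d| + 1) / m := by positivity
    have := cv_diff (k := k) (k' := k') h hx
    rw [← hm, ← hd, sub_zero, mul_div_cancel₀ _ hm0.ne'] at this
    have := neg_abs_le d
    linarith
  · refine ⟨-((|d| + 1) / m), ?_⟩
    have hx : -((|d| + 1) / m) < 0 := by
      have : 0 < (|d| + 1) / m := by positivity
      linarith
    have := cv_diff (k := k) (k' := k') h hx
    rw [← hm, ← hd, zero_sub, neg_neg, mul_div_cancel₀ _ hm0.ne'] at this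
    have := le_abs_self d
    linarith

/-- Slope condition between two curves of a family. -/
def Good {ι : Type*} (S E : ι → ℝ) : Prop := ∀ i j, i ≠ j → |E i - E j| < |S i - S j|

lemma good_cases {ι : Type*} {S E : ι → ℝ} (h : Good S E) {i j : ι} (hij : i ≠ j) :
    |E i - E j| < S i - S j ∨ |E j - E i| < S j - S i := by
  have := h i j hij
  rcases le_total 0 (S i - S j) with h0 | h0
  · left; rwa [abs_of_nonneg h0] at this
  · right; rw [abs_of_nonpos h0, abs_sub_comm] at this; linarith

lemma good_pos {ι : Type*} {S E : ι → ℝ} (h : Good S E) (k : ι → ℝ) {i j : ι} (hij : i ≠ j) :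
    ∃ x, cv (S i) (k i) (E i) x < cv (S j) (k j) (E j) x := by
  rcases good_cases h hij with h | h
  · exact (cv_pos h).2
  · exact (cv_pos h).1

lemma good_unique {ι : Type*} {S E : ι → ℝ} (h : Good S E) (k : ι → ℝ) {i j : ι} (hij : i ≠ j)
    {x y : ℝ} (hx : cv (S i) (k i) (E i) x = cv (S j) (k j) (E j) x)
    (hy : cv (S i) (k i) (E i) y = cv (S j) (k j) (E j) y) : x = y := by
  rcases good_cases h hij with h | h
  · exact (cv_strictMono (k := k i) (k' := k j) h).injective (by simp [hx, hy])
  · exact (cv_strictMono (k := k j) (k' := k i) h).injective (by simp [hx, hy])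

lemma good_exists {ι : Type*} {S E : ι → ℝ} (h : Good S E) (k : ι → ℝ) {i j : ι} (hij : i ≠ j) :
    ∃ x, cv (S i) (k i) (E i) x = cv (S j) (k j) (E j) x := by
  obtain ⟨x, hx⟩ := good_pos h k hij
  obtain ⟨y, hy⟩ := good_pos h k hij.symm
  have := mem_range_of_exists_le_of_exists_ge
    ((continuous_cv (S i) (k i) (E i)).sub (continuous_cv (S j) (k j) (E j))) (c := 0)
    ⟨x, by simpa using hx.le⟩ ⟨y, by simpa using hy.le⟩
  obtain ⟨z, hz⟩ := this
  exact ⟨z, by simpa [sub_eq_zero] using hz⟩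

lemma isArrangement_cv {n : ℕ} {S E : Fin n → ℝ} (h : Good S E) (k : Fin n → ℝ) :
    IsArrangement fun i => Gr (cv (S i) (k i) (E i)) := by
  have hne : ∀ i j, i ≠ j → Gr (cv (S i) (k i) (E i)) ≠ Gr (cv (S j) (k j) (E j)) := by
    intro i j hij heq
    obtain ⟨x, hx⟩ := good_pos h k hij
    have : pt x (cv (S i) (k i) (E i) x) ∈ Gr (cv (S i) (k i) (E i)) := by simp [Gr]
    rw [heq] at this
    simp [Gr] at this
    exact hx.ne this
  refine ⟨⟨fun i j hij => by_contra fun hc => hne i j hc hij,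
    fun i => isPseudoline_Gr (continuous_cv _ _ _), ?_, ?_⟩, ?_⟩
  · rintro i j hij p ⟨hp1, hp2⟩ q ⟨hq1, hq2⟩
    simp only [Gr, Set.mem_setOf_eq] at *
    have h0 : p 0 = q 0 := good_unique h k hij (hp1.symm.trans hp2) (hq1.symm.trans hq2)
    rw [← pt_eta p, ← pt_eta q, hp1, hq1, h0]
  · intro i j hij p hp
    refine ⟨hp, meets_comp (continuous_cv _ _ _) ?_ ?_, meets_comp (continuous_cv _ _ _) ?_ ?_⟩
    · exact good_pos h k hij
    · exact good_pos h k hij.symm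
    · exact good_pos h k hij.symm
    · exact good_pos h k hij
  · intro i j hij
    obtain ⟨x, hx⟩ := good_exists h k hij
    exact ⟨pt x (cv (S i) (k i) (E i) x), by simp [Gr], by simp [Gr, hx]⟩

/-- Generic offsets make the family simple. -/
lemma exists_simple {ι : Type*} [DecidableEq ι] {S E : ι → ℝ} (h : Good S E) (k0 : ι → ℝ) {ρ : ℝ}
    (hρ : 0 < ρ) (s : Finset ι) :
    ∃ k : ι → ℝ, (∀ i, |k i - k0 i| < ρ) ∧
      ∀ i ∈ s, ∀ j ∈ s, ∀ l ∈ s, i ≠ j → i ≠ l → j ≠ l → ∀ x,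
        cv (S i) (k i) (E i) x = cv (S j) (k j) (E j) x →
        cv (S i) (k i) (E i) x ≠ cv (S l) (k l) (E l) x := by
  induction s using Finset.induction_on with
  | empty => exact ⟨k0, by simp [hρ], by simp⟩
  | insert a s ha ih =>
    obtain ⟨k, hk, hs⟩ := ih
    -- bad values
    let bad : Set ℝ := ⋃ i ∈ s, ⋃ j ∈ s, ⋃ (_ : i ≠ j),
      (fun x => cv (S i) (k i) (E i) x - S a * x - E a * bump x) ''
        {x | cv (S i) (k i) (E i) x = cv (S j) (k j) (E j) x}
    have hbad : bad.Finite := by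
      refine s.finite_toSet.biUnion fun i _ => s.finite_toSet.biUnion fun j _ =>
        Set.finite_iUnion fun hij => Set.Finite.image _ ?_
      exact Set.Subsingleton.finite fun x hx y hy => good_unique h k hij hx hy
    obtain ⟨c, hc, hcb⟩ := ((Set.Ioo_infinite (show k0 a - ρ < k0 a + ρ by linarith)).diff
      hbad).nonempty
    have hcb' : ∀ i ∈ s, ∀ j ∈ s, i ≠ j → ∀ x,
        cv (S i) (k i) (E i) x = cv (S j) (k j) (E j) x →
        cv (S i) (k i) (E i) x ≠ cv (S a) c (E a) x := by
      intro i hi j hj hij x hx hx'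
      apply hcb
      simp only [bad, Set.mem_iUnion]
      refine ⟨i, hi, j, hj, hij, x, hx, ?_⟩
      simp only [hx']
      unfold cv; ring
    refine ⟨Function.update k a c, ?_, ?_⟩
    · intro i
      by_cases hi : i = a
      · subst hi; simp [abs_lt]; constructor <;> linarith [hc.1, hc.2]
      · simpa [hi] using hk i
    · have hup : ∀ i ∈ s, Function.update k a c i = k i := by
        intro i hi
        have : i ≠ a := fun h => ha (h ▸ hi)
        simp [this]
      intro i hi j hj l hl hij hil hjl x h1 h2
      rw [Finset.mem_insert] at hi hj hl
      rcases hi with rfl | hi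
      · have hj' := hj.resolve_left hij.symm
        have hl' := hl.resolve_left hil.symm
        simp only [hup j hj', hup l hl', Function.update_self] at h1 h2
        exact hcb' j hj' l hl' hjl x (h1.symm.trans h2) h1.symm
      · rcases hj with rfl | hj
        · have hl' := hl.resolve_left hjl.symm
          simp only [hup i hi, hup l hl', Function.update_self] at h1 h2
          exact hcb' i hi l hl' hil x h2 h1
        · rcases hl with rfl | hl
          · simp only [hup i hi, hup j hj, Function.update_self] at h1 h2
            exact hcb' i hi j hj hij x h1 h2
          · simp only [hup i hi, hup j hj, hup l hl] at h1 h2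
            exact hs i hi j hj l hl hij hil hjl x h1 h2

end BendProof
namespace BendProof

open Topology Filter

lemma line_unique {l m : Set Plane} (hl : IsLine l) (hm : IsLine m) {p q : Plane} (hpq : p ≠ q)
    (hpl : p ∈ l) (hql : q ∈ l) (hpm : p ∈ m) (hqm : q ∈ m) : l = m := by
  have key : ∀ l : Set Plane, IsLine l → p ∈ l → q ∈ l →
      l = {z | ∃ t : ℝ, z = p + t • (q - p)} := by
    rintro l ⟨a, u, hu, rfl⟩ ⟨t, ht⟩ ⟨s, hs⟩
    have hts : s - t ≠ 0 := by
      intro h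
      apply hpq
      rw [ht, hs, sub_eq_zero.1 h]
    have hqp : q - p = (s - t) • u := by rw [ht, hs]; module
    ext z
    constructor
    · rintro ⟨r, rfl⟩
      refine ⟨(r - t) / (s - t), ?_⟩
      rw [hqp, smul_smul, div_mul_cancel₀ _ hts, ht]; module
    · rintro ⟨r, rfl⟩
      refine ⟨t + r * (s - t), ?_⟩
      rw [hqp, ht]; module
  rw [key l hl hpl hql, key m hm hpm hqm]

lemma carrier_exists {s : Set Plane} (hs : IsSegment s ∨ IsRay s) :
    IsClosed s ∧ ∃ l, IsLine l ∧ s ⊆ l := by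
  have hv : (pt 1 0) ≠ 0 := by
    intro h
    have := congrArg (fun p : Plane => p 0) h
    simp at this
  rcases hs with ⟨a, b, rfl⟩ | ⟨a, u, hu, rfl⟩
  · refine ⟨?_, ?_⟩
    · rw [segment_eq_image_lineMap]
      exact (isCompact_Icc.image (AffineMap.lineMap_continuous)).isClosed
    · by_cases hab : b - a = 0
      · refine ⟨_, ⟨a, pt 1 0, hv, rfl⟩, ?_⟩
        have : b = a := sub_eq_zero.1 hab
        subst this
        simp only [segment_same, Set.singleton_subset_iff]
        exact ⟨0, by simp⟩
      · refine ⟨_, ⟨a, b - a, hab, rfl⟩, ?_⟩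
        rw [segment_eq_image']
        rintro _ ⟨t, _, rfl⟩
        exact ⟨t, rfl⟩
  · refine ⟨?_, _, ⟨a, u, hu, rfl⟩, ?_⟩
    · have hemb : IsClosedEmbedding fun t : ℝ => a + t • u :=
        (Homeomorph.addLeft a).isClosedEmbedding.comp (isClosedEmbedding_smul_left hu)
      have := hemb.isClosedMap _ (isClosed_Ici (a := (0 : ℝ)))
      convert this using 1
      ext z
      constructor
      · rintro ⟨t, ht, rfl⟩; exact ⟨t, ht, rfl⟩
      · rintro ⟨t, ht, rfl⟩; exact ⟨t, ht, rfl⟩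
    · rintro _ ⟨t, _, rfl⟩
      exact ⟨t, rfl⟩

lemma finite_bends {C : Set Plane} (hC : IsPolygonal C) : {p | IsBendPoint C p}.Finite := by
  classical
  obtain ⟨𝒮, h𝒮, rfl⟩ := hC
  have hc : ∀ s : Set Plane, ∃ l, s ∈ 𝒮 → IsLine l ∧ s ⊆ l := by
    intro s
    by_cases hs : s ∈ 𝒮
    · obtain ⟨l, hl⟩ := (carrier_exists (h𝒮 s hs)).2
      exact ⟨l, fun _ => hl⟩
    · exact ⟨∅, fun h => absurd h hs⟩
  choose car hcar using hc
  have hfin : (⋃ s ∈ 𝒮, ⋃ t ∈ 𝒮, ⋃ (_ : car s ≠ car t), car s ∩ car t).Finite := by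
    refine 𝒮.finite_toSet.biUnion fun s hs => 𝒮.finite_toSet.biUnion fun t ht =>
      Set.finite_iUnion fun hst => Set.Subsingleton.finite ?_
    rintro p ⟨hp1, hp2⟩ q ⟨hq1, hq2⟩
    by_contra hpq
    exact hst (line_unique (hcar s hs).1 (hcar t ht).1 hpq hp1 hq1 hp2 hq2)
  refine hfin.subset ?_
  rintro p ⟨hpC, hb⟩
  by_contra hp
  simp only [Set.mem_iUnion, not_exists] at hp
  simp only [Set.mem_iUnion] at hpC
  obtain ⟨s, hs, hps⟩ := hpC
  have hU : (⋃ t ∈ 𝒮.filter (fun t => p ∉ t), t)ᶜ ∈ 𝓝 p := by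
    refine IsOpen.mem_nhds (isOpen_compl_iff.2 ?_) ?_
    · refine Set.Finite.isClosed_biUnion (Finset.finite_toSet _) fun t ht => ?_
      exact (carrier_exists (h𝒮 t (Finset.mem_filter.1 ht).1)).1
    · simp
  refine hb _ hU ⟨car s, (hcar s hs).1, ?_⟩
  rintro z ⟨hz, hzU⟩
  simp only [Set.mem_iUnion] at hz
  obtain ⟨t, ht, hzt⟩ := hz
  have hpt : p ∈ t := by
    by_contra hpt
    apply hzU
    simp only [Set.mem_iUnion]
    exact ⟨t, Finset.mem_filter.2 ⟨ht, hpt⟩, hzt⟩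
  by_cases hst : car s = car t
  · rw [hst]; exact (hcar t ht).2 hzt
  · exact absurd ⟨(hcar s hs).2 hps, (hcar t ht).2 hpt⟩ (hp s hs t ht hst)

lemma straight_of_no_bend {C : Set Plane} {γ : ℝ → Plane} (hγ : Continuous γ)
    (hinj : Function.Injective γ) (hC : ∀ x, γ x ∈ C) {a b : ℝ} (hab : a < b)
    (hnb : ∀ x ∈ Set.Ioo a b, ¬ IsBendPoint C (γ x)) :
    ∃ l, IsLine l ∧ ∀ x ∈ Set.Ioo a b, γ x ∈ l := by
  have hloc : ∀ x ∈ Set.Ioo a b, ∃ l, IsLine l ∧ ∀ᶠ y in 𝓝 x, γ y ∈ l := by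
    intro x hx
    have := hnb x hx
    unfold IsBendPoint at this
    push Not at this
    obtain ⟨U, hU, l, hl, hsub⟩ := this (hC x)
    refine ⟨l, hl, ?_⟩
    filter_upwards [hγ.continuousAt hU] with y hy
    exact hsub ⟨hC y, hy⟩
  have hmid : (a + b) / 2 ∈ Set.Ioo a b := ⟨by linarith, by linarith⟩
  obtain ⟨l, hl, hl0⟩ := hloc _ hmid
  refine ⟨l, hl, ?_⟩
  have hopen : IsOpen {x | ∀ᶠ y in 𝓝 x, γ y ∈ l} := by
    rw [isOpen_iff_eventually]
    intro x hx
    exact eventually_eventually_nhds.2 hx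
  have := isPreconnected_Ioo.subset_of_closure_inter_subset hopen ⟨_, hmid, hl0⟩ ?_
  · intro x hx
    exact (this hx).self_of_nhds
  · rintro x ⟨hxc, hx⟩
    obtain ⟨m, hm, hmx⟩ := hloc x hx
    obtain ⟨x', hx'1, hx'2⟩ := mem_closure_iff_nhds.1 hxc _ (eventually_eventually_nhds.2 hmx)
    have h1 : ∀ᶠ y in 𝓝 x', γ y ∈ l ∧ γ y ∈ m := Filter.Eventually.and hx'2 hx'1
    obtain ⟨y, ⟨hyl, hym⟩, hne⟩ := ((h1.filter_mono nhdsWithin_le_nhds).and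
      (self_mem_nhdsWithin (a := x') (s := {x'}ᶜ))).exists
    have hne' : γ y ≠ γ x' := fun h => hne (hinj h)
    have := line_unique hl hm hne' hyl h1.self_of_nhds.1 hym h1.self_of_nhds.2
    rw [this]; exact hmx

/-- A curve that runs monotonically on a straight line. -/
def Str (γ : ℝ → Plane) (I : Set ℝ) : Prop :=
  ∃ (p u : Plane) (τ : ℝ → ℝ), u ≠ 0 ∧ ContinuousOn τ I ∧ StrictMonoOn τ I ∧
    ∀ x ∈ I, γ x = p + τ x • u

lemma str_of_line {γ : ℝ → Plane} (hγ : Continuous γ) (hinj : Function.Injective γ) {a b : ℝ}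
    (hab : a < b) {l : Set Plane} (hl : IsLine l) (h : ∀ x ∈ Set.Ioo a b, γ x ∈ l) :
    Str γ (Set.Ioo a b) := by
  obtain ⟨p, u, hu, rfl⟩ := hl
  obtain ⟨i, hi⟩ : ∃ i, u i ≠ 0 := by
    by_contra hc
    push Not at hc
    exact hu (by ext i; simpa using hc i)
  let τ : ℝ → ℝ := fun x => (γ x i - p i) / u i
  have hτ : ∀ x ∈ Set.Ioo a b, γ x = p + τ x • u := by
    intro x hx
    obtain ⟨t, ht⟩ := h x hx
    have : τ x = t := by simp only [τ, ht]; simp; field_simp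
    rw [this, ht]
  have hτc : ContinuousOn τ (Set.Ioo a b) := by
    apply Continuous.continuousOn
    have := (continuous_coord i).comp hγ
    exact (this.sub continuous_const).div_const _
  have hτi : Set.InjOn τ (Set.Ioo a b) := by
    intro x hx y hy hxy
    apply hinj
    rw [hτ x hx, hτ y hy, hxy]
  rcases hτc.strictMonoOn_of_injOn_Ioo hab hτi with hm | hm
  · exact ⟨p, u, τ, hu, hτc, hm, hτ⟩
  · refine ⟨p, -u, fun x => -τ x, neg_ne_zero.2 hu, hτc.neg, hm.neg, ?_⟩
    intro x hx
    rw [hτ x hx]; simp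

lemma Str.ratio {γ : ℝ → Plane} {I : Set ℝ} (h : Str γ I) {x y z : ℝ} (hx : x ∈ I) (hy : y ∈ I)
    (hz : z ∈ I) (hxy : x ≠ y) :
    ∃ t : ℝ, γ z = γ x + t • (γ y - γ x) ∧ ((x < y ∧ y < z) ∨ (z < y ∧ y < x) → 1 < t) := by
  obtain ⟨p, u, τ, hu, hc, hm, hτ⟩ := h
  have hd : τ y - τ x ≠ 0 := by
    intro h
    exact hxy (hm.injOn hx hy (by linarith))
  refine ⟨(τ z - τ x) / (τ y - τ x), ?_, ?_⟩
  · have h1 : γ y - γ x = (τ y - τ x) • u := by rw [hτ x hx, hτ y hy]; module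
    rw [h1, smul_smul, div_mul_cancel₀ _ hd, hτ x hx, hτ z hz]; module
  · rintro (⟨h1, h2⟩ | ⟨h1, h2⟩)
    · have h1 := hm hx hy h1
      have h2 := hm hy hz h2
      rw [lt_div_iff₀ (by linarith)]; linarith
    · have h1 := hm hz hy h1
      have h2 := hm hy hx h2
      rw [lt_div_iff_of_neg (by linarith)]; linarith

lemma pair_ineq {u v O : Plane} (hind : ∀ α β : ℝ, α • u + β • v = 0 → α = 0 ∧ β = 0)
    {a1 b1 a2 b2 t s : ℝ} (ha1 : 0 < a1) (ha : a1 < a2) (hb2 : 0 < b2)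
    (ht : 1 < t)
    (hX : (O + a1 • u) + t • ((O + b1 • v) - (O + a1 • u)) =
      (O + a2 • u) + s • ((O + b2 • v) - (O + a2 • u))) : a1 * b2 < a2 * b1 := by
  have h0 := hind ((1 - t) * a1 - (1 - s) * a2) (t * b1 - s * b2) (by
    have h := sub_eq_zero.2 hX
    rw [← h]; module)
  obtain ⟨h1, h2⟩ := h0
  have h3 : a1 * t < a2 * s := by nlinarith
  have h4 : a1 * t * b2 < a2 * s * b2 := mul_lt_mul_of_pos_right h3 hb2
  have h5 : t * (a1 * b2) < t * (a2 * b1) := by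
    have : a2 * (t * b1 - s * b2) = 0 := by rw [h2]; ring
    nlinarith
  exact lt_of_mul_lt_mul_left h5 (by linarith)

lemma indep {γ δ : ℝ → Plane} {I : Set ℝ} {p u p' v : Plane} {τ σ : ℝ → ℝ}
    (hu : u ≠ 0) (hv : v ≠ 0)
    (hτc : ContinuousOn τ I) (hτm : StrictMonoOn τ I) (hτ : ∀ x ∈ I, γ x = p + τ x • u)
    (hσc : ContinuousOn σ I) (hσm : StrictMonoOn σ I) (hσ : ∀ x ∈ I, δ x = p' + σ x • v)
    {a o b : ℝ} (hI : Set.Icc a b ⊆ I) (hao : a < o) (hob : o < b) (ho : γ o = δ o)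
    (hxy : ∀ x y, γ x = δ y → x = y) (hb : γ b ≠ δ b) :
    ∀ α β : ℝ, α • u + β • v = 0 → α = 0 ∧ β = 0 := by
  intro α β hαβ
  by_contra hne
  have haI : a ∈ I := hI ⟨le_rfl, by linarith⟩
  have hoI : o ∈ I := hI ⟨hao.le, hob.le⟩
  have hbI : b ∈ I := hI ⟨by linarith, le_rfl⟩
  have hβ : β ≠ 0 := by
    rintro rfl
    apply hne
    simpa [hu] using hαβ
  have hα : α ≠ 0 := by
    rintro rfl
    apply hne
    simpa [hv] using hαβ
  obtain ⟨c, hc0, hvc⟩ : ∃ c : ℝ, c ≠ 0 ∧ v = c • u := by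
    refine ⟨-(α / β), by simp [hα, hβ], ?_⟩
    have : v = β⁻¹ • (β • v) := by rw [smul_smul, inv_mul_cancel₀ hβ, one_smul]
    rw [this, (eq_neg_of_add_eq_zero_right hαβ), smul_neg, smul_smul, neg_smul]
    congr 2; field_simp
  have hmeet : ∀ x ∈ I, ∀ y ∈ I, τ x - τ o = c * (σ y - σ o) → γ x = δ y := by
    intro x hx y hy h
    have h1 : τ x = τ o + c * (σ y - σ o) := by linarith
    have h2 : p' = p + τ o • u - σ o • v := by
      rw [← hτ o hoI, ho, hσ o hoI]; module
    rw [hτ x hx, hσ y hy, h2, h1, hvc]; module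
  have c1 : ContinuousOn (fun x => τ x - τ o) (Set.Icc o b) :=
    (hτc.mono ((Set.Icc_subset_Icc_left hao.le).trans hI)).sub continuousOn_const
  have c2 : ContinuousOn (fun x => c * (σ x - σ o)) (Set.Icc o b) :=
    continuousOn_const.mul
      ((hσc.mono ((Set.Icc_subset_Icc_left hao.le).trans hI)).sub continuousOn_const)
  have c3 : ContinuousOn (fun x => c * (σ x - σ o)) (Set.Icc a o) :=
    continuousOn_const.mul
      ((hσc.mono ((Set.Icc_subset_Icc_right hob.le).trans hI)).sub continuousOn_const)
  have hτb : 0 < τ b - τ o := sub_pos.2 (hτm hoI hbI hob)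
  have hσb : 0 < σ b - σ o := sub_pos.2 (hσm hoI hbI hob)
  have hσa : σ a - σ o < 0 := sub_neg.2 (hσm haI hoI hao)
  have sub1 : Set.Icc o b ⊆ I := (Set.Icc_subset_Icc_left hao.le).trans hI
  have sub2 : Set.Icc a o ⊆ I := (Set.Icc_subset_Icc_right hob.le).trans hI
  rcases lt_or_gt_of_ne hc0 with hc | hc
  · have hpos : 0 < c * (σ a - σ o) := mul_pos_of_neg_of_neg hc hσa
    rcases le_total (τ b - τ o) (c * (σ a - σ o)) with hle | hle
    · obtain ⟨y, hy, hyv⟩ := intermediate_value_Icc' hao.le c3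
        (show τ b - τ o ∈ _ from ⟨by simpa using hτb.le, hle⟩)
      have := hxy _ _ (hmeet b hbI y (sub2 hy) hyv.symm)
      linarith [hy.2]
    · obtain ⟨y, hy, hyv⟩ := intermediate_value_Icc hob.le c1
        (show c * (σ a - σ o) ∈ _ from ⟨by simpa using hpos.le, hle⟩)
      have := hxy _ _ (hmeet y (sub1 hy) a haI hyv)
      linarith [hy.1]
  · have hpos : 0 < c * (σ b - σ o) := mul_pos hc hσb
    rcases le_total (τ b - τ o) (c * (σ b - σ o)) with hle | hle
    · obtain ⟨y, hy, hyv⟩ := intermediate_value_Icc hob.le c2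
        (show τ b - τ o ∈ _ from ⟨by simpa using hτb.le, hle⟩)
      have h1 := hmeet b hbI y (sub1 hy) hyv.symm
      have h2 := hxy _ _ h1
      rw [← h2] at h1
      exact hb h1
    · obtain ⟨y, hy, hyv⟩ := intermediate_value_Icc hob.le c1
        (show c * (σ b - σ o) ∈ _ from ⟨by simpa using hpos.le, hle⟩)
      have h1 := hmeet y (sub1 hy) b hbI hyv
      have h2 := hxy _ _ h1
      rw [h2] at h1
      exact hb h1

end BendProof
namespace BendProof

/-- Eight straight pieces with the prescribed crossing order cannot exist. -/
lemma core {γ : Fin 8 → ℝ → Plane} {a b : ℝ} (hstr : ∀ c, Str (γ c) (Set.Ioo a b))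
    {x : Fin 16 → ℝ} (hx : StrictMono x) (hxI : ∀ r, x r ∈ Set.Ioo a b)
    {s t : ℝ} (hs : a < s) (ht : t < b) (hs1 : s < x 1) (ht1 : x 1 < t)
    (hxy : ∀ x y, γ 0 x = γ 7 y → x = y) (hb : γ 0 t ≠ γ 7 t)
    (e0 : γ 5 (x 0) = γ 6 (x 0)) (e1 : γ 0 (x 1) = γ 7 (x 1)) (e2 : γ 0 (x 2) = γ 6 (x 2))
    (e3 : γ 0 (x 3) = γ 1 (x 3)) (e4 : γ 0 (x 4) = γ 2 (x 4)) (e5 : γ 0 (x 5) = γ 3 (x 5))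
    (e6 : γ 7 (x 6) = γ 3 (x 6)) (e7 : γ 7 (x 7) = γ 6 (x 7)) (e8 : γ 0 (x 8) = γ 4 (x 8))
    (e9 : γ 0 (x 9) = γ 5 (x 9)) (e10 : γ 7 (x 10) = γ 1 (x 10))
    (e11 : γ 7 (x 11) = γ 4 (x 11)) (e12 : γ 7 (x 12) = γ 5 (x 12))
    (e13 : γ 7 (x 13) = γ 2 (x 13)) (e14 : γ 3 (x 14) = γ 4 (x 14))
    (e15 : γ 1 (x 15) = γ 2 (x 15)) : False := by
  obtain ⟨p, u, τ, hu, hτc, hτm, hτ⟩ := hstr 0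
  obtain ⟨p', v, σ, hv, hσc, hσm, hσ⟩ := hstr 7
  have hind := indep hu hv hτc hτm hτ hσc hσm hσ (a := s) (o := x 1) (b := t)
    (fun z hz => ⟨lt_of_lt_of_le hs hz.1, lt_of_le_of_lt hz.2 ht⟩) hs1 ht1 e1 hxy hb
  have hind' : ∀ α β : ℝ, α • v + β • u = 0 → α = 0 ∧ β = 0 := fun α β h =>
    (hind β α (by rw [add_comm]; exact h)).symm
  set O := γ 0 (x 1) with hO
  have hA : ∀ r, γ 0 (x r) = O + (τ (x r) - τ (x 1)) • u := by
    intro r; rw [hO, hτ _ (hxI r), hτ _ (hxI 1)]; module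
  have hB : ∀ r, γ 7 (x r) = O + (σ (x r) - σ (x 1)) • v := by
    intro r; rw [e1, hσ _ (hxI r), hσ _ (hxI 1)]; module
  have mA : ∀ {i j : Fin 16}, i < j → τ (x i) - τ (x 1) < τ (x j) - τ (x 1) := fun h =>
    sub_lt_sub_right (hτm (hxI _) (hxI _) (hx h)) _
  have mB : ∀ {i j : Fin 16}, i < j → σ (x i) - σ (x 1) < σ (x j) - σ (x 1) := fun h =>
    sub_lt_sub_right (hσm (hxI _) (hxI _) (hx h)) _
  set A : Fin 16 → ℝ := fun r => τ (x r) - τ (x 1) with hAd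
  set B : Fin 16 → ℝ := fun r => σ (x r) - σ (x 1) with hBd
  have zA : A 1 = 0 := by simp [hAd]
  have zB : B 1 = 0 := by simp [hBd]
  have mA' : ∀ {i j : Fin 16}, i < j → A i < A j := mA
  have mB' : ∀ {i j : Fin 16}, i < j → B i < B j := mB
  have pA : ∀ {i : Fin 16}, 1 < i → 0 < A i := fun h => zA ▸ mA' h
  have pB : ∀ {i : Fin 16}, 1 < i → 0 < B i := fun h => zB ▸ mB' h
  have hA' : ∀ r, γ 0 (x r) = O + A r • u := hA
  have hB' : ∀ r, γ 7 (x r) = O + B r • v := hB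
  have i1 : A 3 * B 13 < A 4 * B 10 := by
    obtain ⟨t1, h1, h1t⟩ := (hstr 1).ratio (hxI 3) (hxI 10) (hxI 15) (hx (by decide)).ne
    obtain ⟨t2, h2, -⟩ := (hstr 2).ratio (hxI 4) (hxI 13) (hxI 15) (hx (by decide)).ne
    refine pair_ineq hind (pA (by decide)) (mA' (by decide)) (pB (by decide))
      (h1t (Or.inl ⟨hx (by decide), hx (by decide)⟩)) (s := t2) (O := O) ?_
    rw [← hA' 3, ← hA' 4, ← hB' 10, ← hB' 13, e3, e4, e10, e13, ← h1, ← h2, e15]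
  have i2 : A 5 * B 11 < A 8 * B 6 := by
    obtain ⟨t1, h1, h1t⟩ := (hstr 3).ratio (hxI 5) (hxI 6) (hxI 14) (hx (by decide)).ne
    obtain ⟨t2, h2, -⟩ := (hstr 4).ratio (hxI 8) (hxI 11) (hxI 14) (hx (by decide)).ne
    refine pair_ineq hind (pA (by decide)) (mA' (by decide)) (pB (by decide))
      (h1t (Or.inl ⟨hx (by decide), hx (by decide)⟩)) (s := t2) (O := O) ?_
    rw [← hA' 5, ← hA' 8, ← hB' 6, ← hB' 11, e5, e8, e6, e11, ← h1, ← h2, e14]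
  have i3 : B 7 * A 9 < B 12 * A 2 := by
    obtain ⟨t1, h1, h1t⟩ := (hstr 6).ratio (hxI 7) (hxI 2) (hxI 0) (hx (by decide)).ne'
    obtain ⟨t2, h2, -⟩ := (hstr 5).ratio (hxI 12) (hxI 9) (hxI 0) (hx (by decide)).ne'
    refine pair_ineq hind' (pB (by decide)) (mB' (by decide)) (pA (by decide))
      (h1t (Or.inr ⟨hx (by decide), hx (by decide)⟩)) (s := t2) (O := O) ?_
    rw [← hA' 9, ← hA' 2, ← hB' 7, ← hB' 12, e9, e2, e7, e12, ← h1, ← h2, e0]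
  have j1 : A 4 * B 10 < A 5 * B 11 :=
    mul_lt_mul'' (mA' (by decide)) (mB' (by decide)) (pA (by decide)).le (pB (by decide)).le
  have j2 : A 8 * B 6 < A 9 * B 7 :=
    mul_lt_mul'' (mA' (by decide)) (mB' (by decide)) (pA (by decide)).le (pB (by decide)).le
  have j3 : A 2 * B 12 < A 3 * B 13 :=
    mul_lt_mul'' (mA' (by decide)) (mB' (by decide)) (pA (by decide)).le (pB (by decide)).le
  linarith [mul_comm (B 7) (A 9), mul_comm (B 12) (A 2)]

/-- Slopes of the eight classes. -/
def sl : Fin 8 → ℕ := ![0, 27, 28, 220, 232, 31, 32, 20]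

/-- Offsets of the eight classes. -/
noncomputable def cst : Fin 8 → ℝ := ![0, 106739/8000, 56361/4000, 11011/100, 2937/25,
  125617/8000, 31617/2000, 783/80]

/-- Bump amplitudes of the eight classes. -/
noncomputable def am : Fin 8 → ℝ := ![16, 0, 0, 0, 0, 0, 0, 0]

/-- Local model curves. -/
noncomputable def G (a : Fin 8) (t : ℝ) : ℝ := -(sl a : ℝ) * t + cst a + am a * bump t

/-- Sample abscissae separating the crossings. -/
noncomputable def sm : Fin 17 → ℝ := ![0, 19/64, 787/1600, 1581/3200, 159/320, 8801/17600,
  801/1600, 8829/17600, 807/1600, 2431/4800, 811/1600, 5689/11200, 167/320, 1893/3520,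
  923/1600, 1091/1600, 1]

/-- The pair of classes crossing in the given slot. -/
def pr : Fin 16 → Fin 8 × Fin 8 := ![(5,6), (0,7), (0,6), (0,1), (0,2), (0,3), (7,3), (7,6),
  (0,4), (0,5), (7,1), (7,4), (7,5), (7,2), (3,4), (1,2)]

lemma sm_mono : StrictMono sm := by
  rw [Fin.strictMono_iff_lt_succ]
  intro i
  fin_cases i <;> simp [sm] <;> norm_num

lemma sm_mem (r : Fin 17) : 0 ≤ sm r ∧ sm r ≤ 1 := by
  fin_cases r <;> simp [sm] <;> norm_num

lemma sample (r : Fin 16) :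
    G (pr r).1 (sm r.castSucc) + 2 / 10000 < G (pr r).2 (sm r.castSucc) ∧
    G (pr r).2 (sm r.succ) + 2 / 10000 < G (pr r).1 (sm r.succ) := by
  unfold G
  rw [bump_eq (sm_mem _).1 (sm_mem _).2, bump_eq (sm_mem _).1 (sm_mem _).2]
  fin_cases r <;> simp [sm, pr, sl, cst, am] <;> norm_num [min_def, max_def]

end BendProof
namespace BendProof

lemma patch {f : Fin 8 → ℝ → ℝ} (hf : ∀ a, Continuous (f a)) (i : ℕ) (j : ℝ)
    (hp : ∀ a, ∀ t : ℝ, 0 ≤ t → t ≤ 1 → |f a (i + t) - (j + G a t)| ≤ 1 / 10000)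
    (h : Plane ≃ₜ Plane) :
    ∃ a : Fin 8, ∃ x : ℝ, (i : ℝ) < x ∧ x < i + 1 ∧
      IsBendPoint (h '' Gr (f a)) (h (pt x (f a x))) := by
  by_contra hcon
  push Not at hcon
  let γ : Fin 8 → ℝ → Plane := fun a x => h (pt x (f a x))
  have hγc : ∀ a, Continuous (γ a) := fun a =>
    h.continuous.comp (continuous_pt continuous_id (hf a))
  have hγx : ∀ a b x y, γ a x = γ b y → x = y := by
    intro a b x y hxy
    have := congrArg (fun p : Plane => p 0) (h.injective hxy)
    simpa using this
  have hlt : (i : ℝ) < i + 1 := by linarith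
  have hstr : ∀ c, Str (γ c) (Set.Ioo (i : ℝ) (i + 1)) := by
    intro c
    have hinj : Function.Injective (γ c) := fun x y hxy => hγx _ _ _ _ hxy
    obtain ⟨l, hl, hl2⟩ := straight_of_no_bend (C := h '' Gr (f c)) (hγc c) hinj
      (fun x => ⟨_, by simp [Gr], rfl⟩) hlt (fun x hx => hcon c x hx.1 hx.2)
    exact str_of_line (hγc c) hinj hlt hl hl2
  have hsam : ∀ r : Fin 16, f (pr r).1 (i + sm r.castSucc) < f (pr r).2 (i + sm r.castSucc) ∧
      f (pr r).2 (i + sm r.succ) < f (pr r).1 (i + sm r.succ) := by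
    intro r
    obtain ⟨s1, s2⟩ := sample r
    have a1 := abs_le.1 (hp (pr r).1 _ (sm_mem r.castSucc).1 (sm_mem r.castSucc).2)
    have a2 := abs_le.1 (hp (pr r).2 _ (sm_mem r.castSucc).1 (sm_mem r.castSucc).2)
    have a3 := abs_le.1 (hp (pr r).1 _ (sm_mem r.succ).1 (sm_mem r.succ).2)
    have a4 := abs_le.1 (hp (pr r).2 _ (sm_mem r.succ).1 (sm_mem r.succ).2)
    constructor
    · linarith [a1.2, a2.1]
    · linarith [a3.1, a4.2]
  have hex : ∀ r : Fin 16, ∃ x, (i + sm r.castSucc < x ∧ x < i + sm r.succ) ∧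
      f (pr r).1 x = f (pr r).2 x := by
    intro r
    obtain ⟨s1, s2⟩ := hsam r
    have hlt : (i : ℝ) + sm r.castSucc ≤ i + sm r.succ := by
      have := (sm_mono (Fin.castSucc_lt_succ (i := r))).le
      linarith
    obtain ⟨x, hx, hx0⟩ := intermediate_value_Ioo hlt
      (((hf (pr r).1).sub (hf (pr r).2)).continuousOn) (show (0 : ℝ) ∈ _ from
        ⟨by simp only [Pi.sub_apply]; linarith, by simp only [Pi.sub_apply]; linarith⟩)
    exact ⟨x, hx, sub_eq_zero.1 hx0⟩
  choose x hxI hxe using hex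
  have hmono : StrictMono x := by
    rw [Fin.strictMono_iff_lt_succ]
    intro r
    have h1 := (hxI r.castSucc).2
    have h2 := (hxI r.succ).1
    rw [Fin.succ_castSucc] at h1
    linarith
  have hE : ∀ r, γ (pr r).1 (x r) = γ (pr r).2 (x r) := by
    intro r; simp only [γ, hxe r]
  have h07 : γ 0 (i + sm 2) ≠ γ 7 (i + sm 2) := by
    intro heq
    have := congrArg (fun p : Plane => p 1) (h.injective heq)
    simp only [pt_one] at this
    exact (hsam 1).2.ne' this
  refine core hstr hmono (fun r => ?_) (s := i + sm 1) (t := i + sm 2) ?_ ?_ (hxI 1).1 (hxI 1).2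
    (hγx 0 7) h07 (hE 0) (hE 1) (hE 2) (hE 3) (hE 4) (hE 5) (hE 6) (hE 7) (hE 8) (hE 9) (hE 10)
    (hE 11) (hE 12) (hE 13) (hE 14) (hE 15)
  · have h1 := hxI r
    have h2 := (sm_mem r.castSucc).1
    have h3 := (sm_mem r.succ).2
    exact ⟨by linarith, by linarith⟩
  · have : sm 0 < sm 1 := sm_mono (by decide)
    have := (sm_mem 0).1
    linarith
  · have : sm 2 < sm 3 := sm_mono (by decide)
    have := (sm_mem 3).2
    linarith

lemma sl_sep (a a' : Fin 8) (h : a ≠ a') :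
    |am a - am a'| + 1 ≤ |(sl a : ℝ) - sl a'| := by
  fin_cases a <;> fin_cases a' <;> first | exact absurd rfl h | (simp [sl, am]; norm_num [abs_le, le_abs])

lemma sl_le (a : Fin 8) : sl a ≤ 232 := by
  fin_cases a <;> simp [sl]

/-- The small slope perturbation. -/
noncomputable def eta (N : ℕ) : ℝ := 1 / (2 * 10000 * (233 * N * N))

lemma eta_pos {N : ℕ} (hN : 1 ≤ N) : 0 < eta N := by
  have : (0 : ℝ) < N := by exact_mod_cast hN
  unfold eta; positivity

lemma eta_bound {N : ℕ} (hN : 1 ≤ N) {b y : ℝ} (hb0 : 0 ≤ b) (hb : b ≤ 233 * N) (hy0 : 0 ≤ y)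
    (hy : y ≤ N) : eta N * b * y ≤ 1 / 20000 := by
  have hN' : (0 : ℝ) < N := by exact_mod_cast hN
  have h1 : b * y ≤ 233 * N * N := mul_le_mul hb hy hy0 (by positivity)
  have h2 := mul_le_mul_of_nonneg_left h1 (eta_pos hN).le
  have h3 : eta N * (233 * N * N) = 1 / 20000 := by
    unfold eta; field_simp; norm_num
  rw [mul_assoc]; linarith

/-- Slope of the curve with class `a` and index `b`. -/
noncomputable def slope (N : ℕ) (q : Fin 8 × Fin (233 * N)) : ℝ :=
  -(sl q.1 : ℝ) - eta N * (q.2 : ℕ)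

lemma good_slope {N : ℕ} (hN : 1 ≤ N) : Good (slope N) (fun q => am q.1) := by
  rintro ⟨a, b⟩ ⟨a', b'⟩ hne
  have hN' : (1 : ℝ) ≤ N := by exact_mod_cast hN
  simp only [slope]
  by_cases ha : a = a'
  · subst ha
    have hb : (b : ℕ) ≠ (b' : ℕ) := by
      intro h; exact hne (by rw [Fin.ext h])
    have h1 : ((b' : ℕ) : ℝ) - (b : ℕ) ≠ 0 := by
      rw [sub_ne_zero]; exact_mod_cast hb.symm
    have h2 : (-(sl a : ℝ) - eta N * (b : ℕ)) - (-(sl a : ℝ) - eta N * (b' : ℕ)) =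
      eta N * (((b' : ℕ) : ℝ) - (b : ℕ)) := by ring
    rw [h2, sub_self, abs_zero, abs_pos]
    exact mul_ne_zero (eta_pos hN).ne' h1
  · have h1 := sl_sep a a' ha
    have bd : ∀ b : Fin (233 * N), 0 ≤ eta N * (b : ℕ) ∧ eta N * (b : ℕ) ≤ 1 / 20000 := by
      intro b
      have hb : ((b : ℕ) : ℝ) ≤ 233 * N := by exact_mod_cast b.2.le
      have := eta_bound hN (Nat.cast_nonneg _) hb zero_le_one hN'
      exact ⟨mul_nonneg (eta_pos hN).le (Nat.cast_nonneg _), by linarith⟩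
    have h2 := bd b
    have h3 := bd b'
    rcases abs_cases ((sl a : ℝ) - sl a') with h | h
    · have := neg_le_abs (-(sl a : ℝ) - eta N * (b : ℕ) - (-(sl a' : ℝ) - eta N * (b' : ℕ)))
      linarith [h.1, h2.1, h3.2]
    · have := le_abs_self (-(sl a : ℝ) - eta N * (b : ℕ) - (-(sl a' : ℝ) - eta N * (b' : ℕ)))
      linarith [h.1, h2.2, h3.1]

lemma near {N : ℕ} (hN : 1 ≤ N) {a : Fin 8} {b : Fin (233 * N)} {i j : ℕ} (hi : i < N)
    (hb : (b : ℕ) = j + sl a * i) {k : ℝ} (hk : |k - ((b : ℕ) + cst a)| < 1 / 20000) {t : ℝ}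
    (ht0 : 0 ≤ t) (ht1 : t ≤ 1) :
    |cv (slope N (a, b)) k (am a) (i + t) - (j + G a t)| ≤ 1 / 10000 := by
  have hb' : ((b : ℕ) : ℝ) ≤ 233 * N := by exact_mod_cast b.2.le
  have hi' : (i : ℝ) + 1 ≤ N := by exact_mod_cast hi
  have hi0 : (0 : ℝ) ≤ i := Nat.cast_nonneg _
  have h1 := eta_bound hN (Nat.cast_nonneg (b : ℕ)) hb' (y := i + t) (by linarith) (by linarith)
  have h2 : 0 ≤ eta N * (b : ℕ) * (i + t) :=
    mul_nonneg (mul_nonneg (eta_pos hN).le (Nat.cast_nonneg _)) (by linarith)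
  have h3 : cv (slope N (a, b)) k (am a) (i + t) - (j + G a t) =
      (k - ((b : ℕ) + cst a)) - eta N * (b : ℕ) * (i + t) := by
    unfold cv slope G
    rw [bump_add_nat]
    have : ((b : ℕ) : ℝ) = j + sl a * i := by exact_mod_cast hb
    simp only
    linear_combination this
  rw [h3]
  have := abs_lt.1 hk
  rw [abs_le]
  constructor <;> linarith [this.1, this.2]

lemma main (N : ℕ) (hN : 1 ≤ N) : ∃ L : Fin (8 * (233 * N)) → Set Plane,
        IsArrangement L ∧ IsSimple L ∧
        ∀ h : Plane ≃ₜ Plane,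
          (∀ i, IsPolygonal (h '' L i)) →
          N * N ≤ ∑ i, {p | IsBendPoint (h '' L i) p}.ncard := by
  classical
  let e : Fin 8 × Fin (233 * N) ≃ Fin (8 * (233 * N)) := finProdFinEquiv
  let S : Fin (8 * (233 * N)) → ℝ := fun c => slope N (e.symm c)
  let E : Fin (8 * (233 * N)) → ℝ := fun c => am (e.symm c).1
  have hgood : Good S E := fun c d hcd =>
    good_slope hN _ _ (fun h => hcd (e.symm.injective h))
  obtain ⟨k, hk, hsimple⟩ := exists_simple hgood
    (fun c => (((e.symm c).2 : ℕ) : ℝ) + cst (e.symm c).1) (ρ := 1 / 20000) (by norm_num)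
    Finset.univ
  refine ⟨fun c => Gr (cv (S c) (k c) (E c)), isArrangement_cv hgood k, ?_, ?_⟩
  · intro p c d l hc hd hl
    by_contra hcon
    push Not at hcon
    simp only [Gr, Set.mem_setOf_eq] at hc hd hl
    exact hsimple c (Finset.mem_univ _) d (Finset.mem_univ _) l (Finset.mem_univ _)
      hcon.1 hcon.2.1 hcon.2.2 (p 0) (hc.symm.trans hd) (hc.symm.trans hl)
  intro h hpoly
  have hlt : ∀ (q : Fin N × Fin N) (a : Fin 8), (q.2 : ℕ) + sl a * q.1 < 233 * N := by
    intro q a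
    have h1 := q.1.2
    have h2 := q.2.2
    have h3 : sl a * q.1 ≤ 232 * q.1 := Nat.mul_le_mul_right _ (sl_le a)
    omega
  let idx : Fin N × Fin N → Fin 8 → Fin (8 * (233 * N)) := fun q a =>
    e (a, ⟨(q.2 : ℕ) + sl a * q.1, hlt q a⟩)
  have hex : ∀ q : Fin N × Fin N, ∃ a : Fin 8, ∃ x : ℝ, ((q.1 : ℕ) : ℝ) < x ∧
      x < (q.1 : ℕ) + 1 ∧ IsBendPoint (h '' Gr (cv (S (idx q a)) (k (idx q a)) (E (idx q a))))
        (h (pt x (cv (S (idx q a)) (k (idx q a)) (E (idx q a)) x))) := by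
    intro q
    refine patch (f := fun a => cv (S (idx q a)) (k (idx q a)) (E (idx q a)))
      (fun a => continuous_cv _ _ _) q.1 ((q.2 : ℕ) : ℝ) ?_ h
    intro a t ht0 ht1
    have hka := hk (idx q a)
    simp only [idx, Equiv.symm_apply_apply] at hka
    have := near hN (a := a) (b := ⟨(q.2 : ℕ) + sl a * q.1, hlt q a⟩) (i := q.1) (j := q.2) q.1.2
      rfl hka ht0 ht1
    simpa only [S, E, idx, Equiv.symm_apply_apply] using this
  choose a x hx1 hx2 hbend using hex
  have hfin := fun c => finite_bends (hpoly c)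
  let T : Finset (Σ _ : Fin (8 * (233 * N)), Plane) :=
    Finset.univ.sigma fun c => (hfin c).toFinset
  have hT : T.card = ∑ c, {p | IsBendPoint (h '' Gr (cv (S c) (k c) (E c))) p}.ncard := by
    simp only [T, Finset.card_sigma]
    refine Finset.sum_congr rfl fun c _ => ?_
    rw [Set.ncard_eq_toFinset_card _ (hfin c)]
  rw [← hT]
  have hcard : N * N = (Finset.univ : Finset (Fin N × Fin N)).card := by simp
  rw [hcard]
  refine Finset.card_le_card_of_injOn (fun q => ⟨idx q (a q),
    h (pt (x q) (cv (S (idx q (a q))) (k (idx q (a q))) (E (idx q (a q))) (x q)))⟩) ?_ ?_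
  · intro q _
    simp only [T, Finset.coe_sigma, Set.mem_sigma_iff, Finset.coe_univ, Set.mem_univ, true_and,
      Set.Finite.coe_toFinset, Set.mem_setOf_eq]
    exact hbend q
  · intro q _ q' _ hqq
    simp only [Sigma.mk.injEq] at hqq
    obtain ⟨h1, h2⟩ := hqq
    have h2 := eq_of_heq h2
    have hx : x q = x q' := by
      have := congrArg (fun p : Plane => p 0) (h.injective h2)
      simpa using this
    have h3 := e.injective h1
    simp only [Prod.mk.injEq, Fin.mk.injEq] at h3
    obtain ⟨ha, hb⟩ := h3
    have hq1 : (q.1 : ℕ) = q'.1 := by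
      have a1 := hx1 q
      have a2 := hx2 q
      have a3 := hx1 q'
      have a4 := hx2 q'
      rw [hx] at a1 a2
      have b1 : ((q.1 : ℕ) : ℝ) < (q'.1 : ℕ) + 1 := by linarith
      have b2 : ((q'.1 : ℕ) : ℝ) < (q.1 : ℕ) + 1 := by linarith
      have b1' : (q.1 : ℕ) < (q'.1 : ℕ) + 1 := by exact_mod_cast b1
      have b2' : (q'.1 : ℕ) < (q.1 : ℕ) + 1 := by exact_mod_cast b2
      omega
    rw [ha, hq1] at hb
    exact Prod.ext (Fin.ext hq1) (Fin.ext (by omega))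

end BendProof

/-- There exist simple arrangements of `n` pseudolines whose every
representation by polygonal chains has `Ω(n²)` bends in total. -/
theorem exists_arrangement_requiring_quadratic_total_bends :
    ∃ c : ℝ, 0 < c ∧
      {n : ℕ | ∃ L : Fin n → Set Plane,
        IsArrangement L ∧ IsSimple L ∧
        ∀ h : Plane ≃ₜ Plane,
          (∀ i, IsPolygonal (h '' L i)) →
          c * (n : ℝ) ^ 2 ≤
            ∑ i : Fin n, ({p | IsBendPoint (h '' L i) p}.ncard : ℝ)}.Infinite := by
  refine ⟨1 / (8 * 233) ^ 2, by norm_num, ?_⟩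
  refine Set.infinite_of_injective_forall_mem (f := fun N : ℕ => 8 * (233 * (N + 1))) ?_ ?_
  · intro N M hNM
    simp only at hNM
    omega
  · intro N
    obtain ⟨L, h1, h2, h3⟩ := BendProof.main (N + 1) (by omega)
    refine ⟨L, h1, h2, fun h hp => ?_⟩
    have h4 := h3 h hp
    have h5 : (((N + 1) * (N + 1) : ℕ) : ℝ) ≤
        ((∑ i, {p | IsBendPoint (h '' L i) p}.ncard : ℕ) : ℝ) := by exact_mod_cast h4
    rw [Nat.cast_sum] at h5
    refine le_trans (le_of_eq ?_) h5
    push_cast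
    ring
end
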